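/- arXiv:0810.4122 — 9 statements merged into one kernel-verified Lean document; each statement's English description precedes it below -/
import Mathlib

section
/- Let θ : ℤ → ℝ be any function for which there exist c ≥ 0 and a function E : ℝ → ℝ such that for all t ≥ 0 one has ∑_{0 < n ≤ t} θ(n) = c·t + E(t). Let 0 ≤ t₁ ≤ t₂ be real numbers and let g : [t₁,t₂] → ℝ have a continuous derivative whose sign changes only R times on [t₁,t₂] (i.e. [t₁,t₂] can be split into R+1 subintervals on each of which g' does not change sign). Then there is an absolute constant K such that |∑_{t₁ < n ≤ t₂} θ(n)g(n) − c·∫_{t₁}^{t₂} g(t) dt| ≤ K·(R+1)·(sup_{t₁ ≤ t ≤ t₂} |E(t)|)·(sup_{t₁ ≤ t ≤ t₂} |g(t)|). -/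
/-!
Abel summation against the summatory function `S(t) = c t + E(t)` of `θ` gives
`∑ θ(n) g(n) = g(t₂) S(t₂) - g(t₁) S(t₁) - ∫ g' S`. Integrating by parts, the contribution of
the linear term `c t` is exactly `c ∫ g`, so the difference to be bounded equals
`g(t₂) E(t₂) - g(t₁) E(t₁) - ∫ g' E`. The boundary terms are at most `2 ME Mg`, and
`|∫ g' E| ≤ ME ∫ |g'|`. On each of the `R + 1` intervals where `g'` has constant sign,
`∫ |g'|` is the absolute value of an increment of `g`, hence at most `2 Mg`
(`integral_abs_deriv_le`). Altogether `K = 4` works.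
-/

/-- The total variation bound `∫ |g'| ≤ 2 M k` for `g` bounded by `M` and monotone on each of
the first `k` intervals of a subdivision. -/
lemma integral_abs_deriv_le (g g' : ℝ → ℝ) (s : ℕ → ℝ) (M : ℝ) (k : ℕ)
    (hs : ∀ i < k, s i ≤ s (i + 1))
    (hg : ∀ x ∈ Set.Icc (s 0) (s k), HasDerivAt g (g' x) x)
    (hc : ContinuousOn g' (Set.Icc (s 0) (s k)))
    (hsign : ∀ i < k, (∀ x ∈ Set.Icc (s i) (s (i + 1)), 0 ≤ g' x) ∨
      (∀ x ∈ Set.Icc (s i) (s (i + 1)), g' x ≤ 0))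
    (hM : ∀ x ∈ Set.Icc (s 0) (s k), |g x| ≤ M) :
    ∫ x in (s 0)..(s k), |g' x| ≤ k * (2 * M) := by
  have hmono : ∀ i j, i ≤ j → j ≤ k → s i ≤ s j := by
    intro i j hij
    induction j, hij using Nat.le_induction with
    | base => intro _; exact le_rfl
    | succ j _ ih => intro hj; exact (ih (by omega)).trans (hs j (by omega))
  have hsub : ∀ i < k, Set.Icc (s i) (s (i + 1)) ⊆ Set.Icc (s 0) (s k) := fun i hi =>
    Set.Icc_subset_Icc (hmono 0 i (by omega) (by omega)) (hmono (i + 1) k (by omega) le_rfl)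
  have hint : ∀ i < k, IntervalIntegrable g' MeasureTheory.volume (s i) (s (i + 1)) :=
    fun i hi => (hc.mono (hsub i hi)).intervalIntegrable_of_Icc (hs i hi)
  rw [← intervalIntegral.sum_integral_adjacent_intervals (fun i hi => (hint i hi).abs)]
  have hpiece : ∀ i ∈ Finset.range k, ∫ x in (s i)..(s (i + 1)), |g' x| ≤ 2 * M := by
    intro i hi
    rw [Finset.mem_range] at hi
    have hftc : ∫ x in (s i)..(s (i + 1)), g' x = g (s (i + 1)) - g (s i) := by
      apply intervalIntegral.integral_eq_sub_of_hasDerivAt _ (hint i hi)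
      rw [Set.uIcc_of_le (hs i hi)]
      exact fun x hx => hg x (hsub i hi hx)
    have h1 := abs_le.1 (hM _ (hsub i hi (Set.left_mem_Icc.2 (hs i hi))))
    have h2 := abs_le.1 (hM _ (hsub i hi (Set.right_mem_Icc.2 (hs i hi))))
    rcases hsign i hi with h | h
    · rw [intervalIntegral.integral_congr (g := g') (by
        rw [Set.uIcc_of_le (hs i hi)]
        exact fun x hx => abs_of_nonneg (h x hx)), hftc]
      linarith
    · rw [intervalIntegral.integral_congr (g := fun x => -g' x) (by
        rw [Set.uIcc_of_le (hs i hi)]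
        exact fun x hx => abs_of_nonpos (h x hx)), intervalIntegral.integral_neg, hftc]
      linarith
  calc _ ≤ ∑ _i ∈ Finset.range k, 2 * M := Finset.sum_le_sum hpiece
    _ = _ := by simp

/-- An integer sum over `[a, b]` with `a, b ≥ 0`, rewritten over the natural numbers. -/
lemma sum_int_Icc_eq (f : ℤ → ℝ) (a b : ℕ) :
    ∑ n ∈ Finset.Icc (a : ℤ) b, f n = ∑ n ∈ Finset.Icc a b, f n := by
  symm
  apply Finset.sum_bij (fun (n : ℕ) _ => (n : ℤ))
  · intro n hn
    simp only [Finset.mem_Icc] at hn ⊢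
    omega
  · intro m _ n _ h
    exact_mod_cast h
  · intro n hn
    simp only [Finset.mem_Icc] at hn
    exact ⟨n.toNat, by simp only [Finset.mem_Icc]; omega, by omega⟩
  · intro n _
    rfl

/-- Partial summation estimate: if the summatory function of `θ` is `c·t + E(t)` and `g` has a
continuous derivative whose sign changes only `R` times on `[t₁, t₂]`, then
`∑_{t₁ < n ≤ t₂} θ(n) g(n)` equals `c ∫_{t₁}^{t₂} g` up to
`O((R+1) · sup |E| · sup |g|)` with an absolute implied constant. -/
theorem sum_product_arithmetic_continuous :
    ∃ K : ℝ, 0 < K ∧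
      ∀ (θ : ℤ → ℝ) (c : ℝ) (E : ℝ → ℝ),
        0 ≤ c →
        (∀ t : ℝ, 0 ≤ t → ∑ n ∈ Finset.Icc (1 : ℤ) ⌊t⌋, θ n = c * t + E t) →
        ∀ (t₁ t₂ : ℝ), 0 ≤ t₁ → t₁ ≤ t₂ →
        ∀ (g g' : ℝ → ℝ) (R : ℕ),
          (∀ x ∈ Set.Icc t₁ t₂, HasDerivAt g (g' x) x) →
          ContinuousOn g' (Set.Icc t₁ t₂) →
          (∃ s : ℕ → ℝ, s 0 = t₁ ∧ s (R + 1) = t₂ ∧ (∀ i ≤ R, s i ≤ s (i + 1)) ∧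
            ∀ i ≤ R, (∀ x ∈ Set.Icc (s i) (s (i + 1)), 0 ≤ g' x) ∨
                     (∀ x ∈ Set.Icc (s i) (s (i + 1)), g' x ≤ 0)) →
        ∀ ME Mg : ℝ,
          (∀ t ∈ Set.Icc t₁ t₂, |E t| ≤ ME) →
          (∀ t ∈ Set.Icc t₁ t₂, |g t| ≤ Mg) →
          |(∑ n ∈ Finset.Icc (⌊t₁⌋ + 1) ⌊t₂⌋, θ n * g (n : ℝ)) -
              c * ∫ t in t₁..t₂, g t| ≤ K * (R + 1) * ME * Mg := by
  refine ⟨4, by norm_num, ?_⟩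
  intro θ c E _ hS t₁ t₂ h0 h12 g g' R hg hg'c ⟨s, hs0, hsR, hs, hsign⟩ ME Mg hE hMg
  have hu : Set.uIcc t₁ t₂ = Set.Icc t₁ t₂ := Set.uIcc_of_le h12
  have hl : t₁ ∈ Set.Icc t₁ t₂ := Set.left_mem_Icc.2 h12
  have hr : t₂ ∈ Set.Icc t₁ t₂ := Set.right_mem_Icc.2 h12
  have hME : 0 ≤ ME := (abs_nonneg _).trans (hE _ hl)
  have hMg0 : 0 ≤ Mg := (abs_nonneg _).trans (hMg _ hl)
  have hvar : ∫ x in t₁..t₂, |g' x| ≤ (R + 1) * (2 * Mg) := by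
    have := integral_abs_deriv_le g g' s Mg (R + 1) (fun i hi => hs i (by omega))
      (by rwa [hs0, hsR]) (by rwa [hs0, hsR]) (fun i hi => hsign i (by omega))
      (by rwa [hs0, hsR])
    rw [hs0, hsR] at this
    exact_mod_cast this
  have hg'i : IntervalIntegrable g' MeasureTheory.volume t₁ t₂ :=
    hg'c.intervalIntegrable_of_Icc h12
  -- The summatory function in the form used by Abel summation: the value of the coefficient
  -- at `0` is set to `0`, so that sums from `0` and from `1` agree.
  let a : ℕ → ℝ := fun n => if n = 0 then 0 else θ n
  have ha : ∀ t : ℝ, 0 ≤ t → ∑ n ∈ Finset.Icc 0 ⌊t⌋₊, a n = c * t + E t := by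
    intro t ht
    rw [← hS t ht, ← Int.natCast_floor_eq_floor ht, ← Nat.cast_one, sum_int_Icc_eq,
      ← Finset.add_sum_Ioc_eq_sum_Icc (Nat.zero_le _)]
    simp only [a, if_true, zero_add]
    refine Finset.sum_congr (by ext; simp [Nat.succ_le_iff, Nat.pos_iff_ne_zero]) ?_
    intro n hn
    rw [if_neg (by simp at hn; omega)]
  have hsum : ∑ n ∈ Finset.Icc (⌊t₁⌋ + 1) ⌊t₂⌋, θ n * g (n : ℝ) =
      ∑ n ∈ Finset.Ioc ⌊t₁⌋₊ ⌊t₂⌋₊, g n * a n := by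
    rw [← Int.natCast_floor_eq_floor h0, ← Int.natCast_floor_eq_floor (h0.trans h12),
      ← Nat.cast_succ, sum_int_Icc_eq]
    refine Finset.sum_congr (by ext; simp) ?_
    intro n hn
    simp only [a]
    rw [if_neg (by simp at hn; omega), mul_comm]
    simp
  have hderiv : Set.EqOn (deriv g) g' (Set.Icc t₁ t₂) := fun x hx => (hg x hx).deriv
  have hdi : MeasureTheory.IntegrableOn (deriv g) (Set.Icc t₁ t₂) :=
    (hg'c.congr hderiv).integrableOn_Icc
  have habel := sum_mul_eq_sub_sub_integral_mul a h0 h12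
    (fun t ht => (hg t ht).differentiableAt) hdi
  have hSi := integrableOn_mul_sum_Icc a (m := 0) h0 hdi
  rw [ha _ h0, ha _ (h0.trans h12), ← intervalIntegral.integral_of_le h12,
    intervalIntegral.integral_congr (g := fun t => g' t * (c * t + E t)) (by
      rw [hu]
      intro t ht
      simp only [hderiv ht, ha t (h0.trans ht.1)])] at habel
  have hSi' : IntervalIntegrable (fun t => g' t * (c * t + E t)) MeasureTheory.volume t₁ t₂ := by
    rw [intervalIntegrable_iff_integrableOn_Icc_of_le h12]
    refine hSi.congr_fun ?_ measurableSet_Icc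
    intro t ht
    simp only [hderiv ht, ha t (h0.trans ht.1)]
  have hlin : IntervalIntegrable (fun t => g' t * (c * t)) MeasureTheory.volume t₁ t₂ :=
    hg'i.mul_continuousOn (by fun_prop)
  have hEi : IntervalIntegrable (fun t => g' t * E t) MeasureTheory.volume t₁ t₂ := by
    refine (hSi'.sub hlin).congr ?_
    intro t _
    simp only
    ring
  have hsplit : ∫ t in t₁..t₂, g' t * (c * t + E t) =
      (∫ t in t₁..t₂, g' t * (c * t)) + ∫ t in t₁..t₂, g' t * E t := by
    rw [← intervalIntegral.integral_add hlin hEi]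
    simp only [mul_add]
  have hparts : ∫ t in t₁..t₂, g' t * (c * t) =
      g t₂ * (c * t₂) - g t₁ * (c * t₁) - c * ∫ t in t₁..t₂, g t := by
    have := intervalIntegral.integral_mul_deriv_eq_deriv_mul (u := g) (v := fun t => c * t)
      (u' := g') (v' := fun _ => c) (a := t₁) (b := t₂) (by rwa [hu])
      (fun x _ => by simpa using (hasDerivAt_id x).const_mul c) hg'i (by simp)
    rw [intervalIntegral.integral_mul_const] at this
    linarith
  have hbd : |∫ t in t₁..t₂, g' t * E t| ≤ ME * ((R + 1) * (2 * Mg)) := by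
    calc |∫ t in t₁..t₂, g' t * E t| ≤ ∫ t in t₁..t₂, |g' t * E t| :=
          intervalIntegral.abs_integral_le_integral_abs h12
      _ ≤ ∫ t in t₁..t₂, ME * |g' t| := by
          refine intervalIntegral.integral_mono_on h12 hEi.abs (hg'i.abs.const_mul ME) ?_
          intro t ht
          rw [abs_mul, mul_comm]
          exact mul_le_mul_of_nonneg_right (hE t ht) (abs_nonneg _)
      _ = ME * ∫ t in t₁..t₂, |g' t| := intervalIntegral.integral_const_mul _ _
      _ ≤ _ := mul_le_mul_of_nonneg_left hvar hME
  have hb : ∀ t ∈ Set.Icc t₁ t₂, |g t * E t| ≤ Mg * ME := fun t ht => by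
    rw [abs_mul]
    exact mul_le_mul (hMg t ht) (hE t ht) (abs_nonneg _) hMg0
  have key : (∑ n ∈ Finset.Icc (⌊t₁⌋ + 1) ⌊t₂⌋, θ n * g (n : ℝ)) - c * ∫ t in t₁..t₂, g t =
      g t₂ * E t₂ - g t₁ * E t₁ - ∫ t in t₁..t₂, g' t * E t := by
    rw [hsum, habel, hsplit, hparts]
    ring
  rw [key]
  have h1 := abs_le.1 (hb _ hl)
  have h2 := abs_le.1 (hb _ hr)
  have h3 := abs_le.1 hbd
  have h4 : 0 ≤ (R : ℝ) * (ME * Mg) := by positivity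
  rw [abs_le]
  constructor <;> nlinarith
end

section
/- There is an absolute constant K such that for all nonzero real numbers a and b, the Lebesgue measure of the set {t ∈ ℝ : |a·t² + b| ≤ 1} is at most K·min{|a|^{−1/2}, |a·b|^{−1/2}}. -/
open MeasureTheory

/-!
Write `r = |a|^{-1/2}` and `q = |b|^{-1/2}`, so that `|ab|^{-1/2} = r q`; the constant `K = 4` works.
If `|b| ≤ 1`, the minimum is `r`, and `|a| t² ≤ 2` forces `|t| ≤ 2 r`.
If `|b| > 1`, the minimum is `r q`. By the reverse triangle inequality `||a| t² - |b|| ≤ 1`, that is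
`||t| - s| (|t| + s) ≤ r²` with `s = r / q`, hence `||t| - s| ≤ r² / s = r q`. So `t` lies in one
of two intervals of length `2 r q`.
-/

/-- The only property of `x^{-1/2}`, besides positivity and multiplicativity, that the estimate uses. -/
lemma mul_rpow_neg_half_sq {x : ℝ} (hx : 0 < x) : x * (x ^ (-(1 / 2) : ℝ)) ^ 2 = 1 := by
  rw [← Real.rpow_natCast, ← Real.rpow_mul hx.le]
  norm_num [Real.rpow_neg_one, hx.ne']

/-- The measure of `{t : |a t² + b| ≤ 1}` is `O(min{|a|^{-1/2}, |ab|^{-1/2}})`. -/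
theorem measure_abs_quadratic_le :
    ∃ K : ℝ, 0 < K ∧ ∀ a b : ℝ, a ≠ 0 → b ≠ 0 →
      volume {t : ℝ | |a * t ^ 2 + b| ≤ 1} ≤
        ENNReal.ofReal (K * min (|a| ^ (-(1 / 2) : ℝ)) (|a * b| ^ (-(1 / 2) : ℝ))) := by
  refine ⟨4, by norm_num, fun a b ha hb => ?_⟩
  have hA : 0 < |a| := abs_pos.2 ha
  have hB : 0 < |b| := abs_pos.2 hb
  rw [abs_mul a b, Real.mul_rpow hA.le hB.le]
  have hr2 := mul_rpow_neg_half_sq hA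
  have hq2 := mul_rpow_neg_half_sq hB
  have hr : 0 < |a| ^ (-(1 / 2) : ℝ) := Real.rpow_pos_of_pos hA _
  have hq : 0 < |b| ^ (-(1 / 2) : ℝ) := Real.rpow_pos_of_pos hB _
  generalize |a| ^ (-(1 / 2) : ℝ) = r at *
  generalize |b| ^ (-(1 / 2) : ℝ) = q at *
  have key : ∀ t : ℝ, |a * t ^ 2 + b| ≤ 1 → |(|a| * t ^ 2 - |b|)| ≤ 1 := by
    intro t ht
    have h := abs_abs_sub_abs_le (a * t ^ 2) (-b)
    rw [abs_neg, abs_mul, abs_of_nonneg (sq_nonneg t), sub_neg_eq_add] at h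
    exact h.trans ht
  rcases le_or_gt |b| 1 with h1 | h1
  · have hq1 : 1 ≤ q := by
      by_contra! h
      nlinarith
    rw [min_eq_left (by nlinarith)]
    have hsub : {t : ℝ | |a * t ^ 2 + b| ≤ 1} ⊆ Set.Icc (-(2 * r)) (2 * r) := by
      intro t ht
      have h := (abs_le.1 (key t ht)).2
      refine abs_le.1 (abs_le_of_sq_le_sq ?_ (by positivity))
      have : |a| * t ^ 2 ≤ |a| * (2 * r) ^ 2 := by nlinarith
      exact le_of_mul_le_mul_left this hA
    refine (measure_mono hsub).trans ?_
    rw [Real.volume_Icc]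
    exact ENNReal.ofReal_le_ofReal (by linarith)
  · have hq1 : q ≤ 1 := by
      by_contra! h
      nlinarith
    rw [min_eq_right (by nlinarith)]
    obtain ⟨s, hs⟩ : ∃ s, s = r / q := ⟨_, rfl⟩
    have hs0 : 0 < s := hs ▸ div_pos hr hq
    have hsq : s * q = r := by rw [hs]; field_simp
    have hs2 : |a| * s ^ 2 = |b| := by
      have : |a| * s ^ 2 * q ^ 2 = |b| * q ^ 2 := by
        rw [hq2, ← hr2, ← hsq]; ring
      exact mul_right_cancel₀ (by positivity) this
    have hsub : {t : ℝ | |a * t ^ 2 + b| ≤ 1} ⊆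
        Set.Icc (s - r * q) (s + r * q) ∪ Set.Icc (-s - r * q) (-s + r * q) := by
      intro t ht
      have h := key t ht
      rw [← hs2, ← sq_abs t, ← mul_sub, abs_mul, abs_abs, sq_sub_sq, abs_mul,
        abs_of_nonneg (by positivity : 0 ≤ |t| + s)] at h
      have h2 : |(|t| - s)| ≤ r * q := by
        have h3 : |a| * s * |(|t| - s)| ≤ |a| * s * (r * q) := by
          calc |a| * s * |(|t| - s)| ≤ |a| * ((|t| + s) * |(|t| - s)|) := by
                rw [mul_assoc]
                gcongr
                linarith [abs_nonneg t]
            _ ≤ 1 := h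
            _ = |a| * s * (r * q) := by rw [← hr2, ← hsq]; ring
        exact le_of_mul_le_mul_left h3 (by positivity)
      obtain ⟨h3, h4⟩ := abs_le.1 h2
      rcases abs_cases t with ⟨h5, -⟩ | ⟨h5, -⟩
      · left; constructor <;> linarith
      · right; constructor <;> linarith
    refine (measure_mono hsub).trans ((measure_union_le _ _).trans ?_)
    rw [Real.volume_Icc, Real.volume_Icc]
    have := mul_pos hr hq
    rw [← ENNReal.ofReal_add (by linarith) (by linarith)]
    exact ENNReal.ofReal_le_ofReal (by linarith)
end

section
/- For every integer k > 2 there is a constant K (depending only on k) such that for all nonzero real numbers a and b, the two-dimensional Lebesgue measure of the set {(t,u) ∈ ℝ² : |a·t² + b·u^k| ≤ 1} is at most K·|a|^{−1/2}·|b|^{−1/k}. -/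
open MeasureTheory

/-!
For fixed `u`, the slice in `t` is, after rescaling by `√|a|`, a set `{x : |x² - c| ≤ 1}` with
`|c| = |b| |u|^k`. Such a set is contained in two intervals of length `√(c+1) - √(c-1)`, so its
measure is at most `4 / √(1 + |c|)` (`volume_abs_sq_sub_le`). By Fubini, and after rescaling `u` by
`|b|^{1/k}`, it remains to see that `4 / √(1 + |y|^k)` is integrable over `ℝ`: it is dominated by a
multiple of `(1 + |y|)^{-k/2}` (`slice_bound_le`), and `k / 2 > 1`.
-/

theorem volume_abs_sq_sub_le (c : ℝ) :
    volume {x : ℝ | |x ^ 2 - c| ≤ 1} ≤ ENNReal.ofReal (4 / √(1 + |c|)) := by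
  rcases lt_or_ge c 1 with hc | hc
  · rcases lt_or_ge c (-1) with hc' | hc'
    · have : {x : ℝ | |x ^ 2 - c| ≤ 1} = ∅ := by
        ext x
        simp only [Set.mem_setOf_eq, Set.mem_empty_iff_false, iff_false, not_le]
        exact lt_of_lt_of_le (by nlinarith [sq_nonneg x]) (le_abs_self _)
      simp [this]
    · have hsub : {x : ℝ | |x ^ 2 - c| ≤ 1} ⊆ Set.Icc (-√2) (√2) := by
        intro x hx
        have hx := (abs_le.1 (show |x ^ 2 - c| ≤ 1 from hx)).2
        exact abs_le.1 (Real.abs_le_sqrt (by linarith))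
      refine (measure_mono hsub).trans ?_
      rw [Real.volume_Icc]
      apply ENNReal.ofReal_le_ofReal
      have h1 : √(1 + |c|) ≤ √2 := Real.sqrt_le_sqrt (by linarith [abs_le.2 ⟨hc', hc.le⟩])
      rw [le_div_iff₀ (Real.sqrt_pos.2 (by positivity))]
      nlinarith [Real.sq_sqrt (show (0 : ℝ) ≤ 2 by norm_num), Real.sqrt_nonneg 2]
  · have hsub : {x : ℝ | |x ^ 2 - c| ≤ 1} ⊆
        Set.Icc (√(c - 1)) (√(c + 1)) ∪ Set.Icc (-√(c + 1)) (-√(c - 1)) := by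
      intro x hx
      have hx := abs_le.1 (show |x ^ 2 - c| ≤ 1 from hx)
      have h1 : √(c - 1) ≤ |x| := Real.sqrt_le_iff.2 ⟨abs_nonneg _, by rw [sq_abs]; linarith⟩
      have h2 : |x| ≤ √(c + 1) := Real.abs_le_sqrt (by linarith)
      rcases abs_cases x with ⟨h, _⟩ | ⟨h, _⟩ <;> rw [h] at h1 h2
      · exact Or.inl ⟨h1, h2⟩
      · exact Or.inr ⟨by linarith, by linarith⟩
    refine (measure_mono hsub).trans ((measure_union_le _ _).trans ?_)
    have hle : √(c - 1) ≤ √(c + 1) := Real.sqrt_le_sqrt (by linarith)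
    rw [Real.volume_Icc, Real.volume_Icc, ← ENNReal.ofReal_add (by linarith) (by linarith)]
    apply ENNReal.ofReal_le_ofReal
    rw [abs_of_nonneg (by linarith), le_div_iff₀ (Real.sqrt_pos.2 (by linarith)), add_comm 1 c]
    -- With `p = √(c+1)` and `q = √(c-1)`, this is `2(p - q)p ≤ 2(p - q)(p + q) = 4`.
    nlinarith [Real.sq_sqrt (show 0 ≤ c - 1 by linarith), Real.sq_sqrt (show 0 ≤ c + 1 by linarith),
      Real.sqrt_nonneg (c - 1), mul_nonneg (sub_nonneg.2 hle) (Real.sqrt_nonneg (c - 1))]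

theorem volume_abs_mul_sq_add_le (a c : ℝ) (ha : a ≠ 0) :
    volume {t : ℝ | |a * t ^ 2 + c| ≤ 1} ≤
      ENNReal.ofReal (|a| ^ (-(1 / 2) : ℝ) * (4 / √(1 + |c|))) := by
  have hs : 0 < √|a| := Real.sqrt_pos.2 (abs_pos.2 ha)
  obtain ⟨d, hd, h⟩ : ∃ d : ℝ, |d| = |c| ∧ ∀ t : ℝ, |a * t ^ 2 + c| = |(√|a| * t) ^ 2 - d| := by
    rcases abs_cases a with ⟨h, _⟩ | ⟨h, _⟩
    · refine ⟨-c, abs_neg c, fun t => ?_⟩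
      rw [mul_pow, Real.sq_sqrt (abs_nonneg a), h, sub_neg_eq_add]
    · refine ⟨c, rfl, fun t => ?_⟩
      rw [mul_pow, Real.sq_sqrt (abs_nonneg a), h, ← abs_neg]
      congr 1; ring
  have hset : {t : ℝ | |a * t ^ 2 + c| ≤ 1} = (√|a| * ·) ⁻¹' {x : ℝ | |x ^ 2 - d| ≤ 1} := by
    ext t; simp [h]
  rw [hset, Real.volume_preimage_mul_left hs.ne', abs_of_pos (inv_pos.2 hs),
    ENNReal.ofReal_mul (by positivity), Real.rpow_neg (abs_nonneg a), ← Real.sqrt_eq_rpow, ← hd]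
  gcongr
  exact volume_abs_sq_sub_le d

/-- Convexity gives `(1 + s)^k ≤ 2^k (1 + s^k)`, which turns the slice bound into one whose
integrability is available. -/
theorem slice_bound_le (k : ℕ) (s : ℝ) (hs : 0 ≤ s) :
    4 / √(1 + s ^ k) ≤ 4 * √(2 ^ k) * (1 + s) ^ (-((k : ℝ) / 2)) := by
  have h1 : (1 + s) ^ k ≤ 2 ^ k * (1 + s ^ k) := by
    refine (add_pow_le zero_le_one hs k).trans ?_
    rw [one_pow]
    gcongr
    · norm_num
    · omega
  have h2 : (1 + s) ^ ((k : ℝ) / 2) = √((1 + s) ^ k) := by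
    rw [Real.sqrt_eq_rpow, ← Real.rpow_natCast, ← Real.rpow_mul (by positivity)]
    congr 1; ring
  rw [Real.rpow_neg (by positivity), h2, ← div_eq_mul_inv,
    div_le_div_iff₀ (by positivity) (by positivity), mul_assoc, ← Real.sqrt_mul (by positivity)]
  gcongr

/-- For `k > 2`, the measure of `{(t,u) : |a t² + b u^k| ≤ 1}` is `O(|a|^{-1/2} |b|^{-1/k})`. -/
theorem measure_abs_tt_uk_le (k : ℕ) (hk : 2 < k) :
    ∃ K : ℝ, 0 < K ∧ ∀ a b : ℝ, a ≠ 0 → b ≠ 0 →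
      volume {p : ℝ × ℝ | |a * p.1 ^ 2 + b * p.2 ^ k| ≤ 1} ≤
        ENNReal.ofReal (K * |a| ^ (-(1 / 2) : ℝ) * |b| ^ (-(1 / (k : ℝ)))) := by
  set g : ℝ → ℝ := fun y => 4 * √(2 ^ k) * (1 + |y|) ^ (-((k : ℝ) / 2)) with hg
  have hk' : (2 : ℝ) < k := by exact_mod_cast hk
  have hgint : Integrable g := by
    have : Integrable (fun y : ℝ => (1 + ‖y‖) ^ (-((k : ℝ) / 2))) :=
      integrable_one_add_norm (by simp; linarith)
    exact this.const_mul _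
  have hg0 : ∀ y, 0 ≤ g y := fun y => by positivity
  have hI : 0 ≤ ∫ y, g y := integral_nonneg hg0
  refine ⟨(∫ y, g y) + 1, by linarith, fun a b ha hb => ?_⟩
  set β : ℝ := |b| ^ (1 / (k : ℝ)) with hβ
  have hb' : 0 < |b| := abs_pos.2 hb
  have hβ0 : 0 < β := Real.rpow_pos_of_pos hb' _
  have hβk : β ^ k = |b| := by
    rw [hβ, one_div, Real.rpow_inv_natCast_pow hb'.le (by omega)]
  have hmeas : MeasurableSet {p : ℝ × ℝ | |a * p.1 ^ 2 + b * p.2 ^ k| ≤ 1} :=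
    (isClosed_le (by fun_prop) (by fun_prop)).measurableSet
  rw [Measure.volume_eq_prod, Measure.prod_apply_symm hmeas]
  have hslice : ∀ u : ℝ, volume ((fun t : ℝ => (t, u)) ⁻¹'
      {p : ℝ × ℝ | |a * p.1 ^ 2 + b * p.2 ^ k| ≤ 1}) ≤
      ENNReal.ofReal (|a| ^ (-(1 / 2) : ℝ) * g (β * u)) := by
    intro u
    refine (volume_abs_mul_sq_add_le a (b * u ^ k) ha).trans (ENNReal.ofReal_le_ofReal ?_)
    gcongr
    have := slice_bound_le k |β * u| (abs_nonneg _)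
    rwa [abs_mul β u, abs_of_pos hβ0, mul_pow, hβk, ← abs_pow, ← abs_mul, ← abs_of_pos hβ0,
      ← abs_mul] at this
  refine (lintegral_mono hslice).trans ?_
  have hint : Integrable (fun u => |a| ^ (-(1 / 2) : ℝ) * g (β * u)) :=
    (hgint.comp_mul_left' hβ0.ne').const_mul _
  rw [← ofReal_integral_eq_lintegral_ofReal hint
    (Filter.Eventually.of_forall fun u => mul_nonneg (by positivity) (hg0 _))]
  apply ENNReal.ofReal_le_ofReal
  rw [integral_const_mul, Measure.integral_comp_mul_left, abs_of_pos (inv_pos.2 hβ0), smul_eq_mul,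
    Real.rpow_neg hb'.le, ← hβ]
  have : 0 ≤ |a| ^ (-(1 / 2) : ℝ) * β⁻¹ := by positivity
  nlinarith
end

section
/- There is an absolute constant K such that for all nonzero real numbers a and b, the Lebesgue measure of the set {t ∈ ℝ : |a·t² + b·t| ≤ 1} is at most K·min{|a|^{−1/2}, |b|^{−1}}. -/
/-!
Put `u = |t|` and `v = |t + b / a|`, so that `|a t² + b t| = |a| u v`, while `|b| ≤ |a| (u + v)` by
the triangle inequality. If `|a| u v ≤ 1` and `w = min u v`, then `|a| w² ≤ 1` and
`|b| w ≤ |a| (u + v) w ≤ 2 |a| u v ≤ 2`. Hence `w ≤ r := 2 min {|a|^{-1/2}, |b|⁻¹}`: the set lies in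
the union of the two intervals of radius `r` around the roots `0` and `-b / a`, which has measure
at most `4 r`, so `K = 8` works.
-/

open MeasureTheory

/-- A point where `|a t² + b t| ≤ 1` is close to one of the roots `0`, `-b / a`. -/
lemma near_root_of_abs_le {a b t : ℝ} (ha : a ≠ 0) (hb : b ≠ 0)
    (ht : |a * t ^ 2 + b * t| ≤ 1) :
    |t| ≤ 2 * min (|a| ^ (-(1 / 2) : ℝ)) |b|⁻¹ ∨
      |t + b / a| ≤ 2 * min (|a| ^ (-(1 / 2) : ℝ)) |b|⁻¹ := by
  have ha' : 0 < |a| := abs_pos.mpr ha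
  have hb' : 0 < |b| := abs_pos.mpr hb
  have huv : |a| * (|t| * |t + b / a|) ≤ 1 := by
    have h : a * (t * (t + b / a)) = a * t ^ 2 + b * t := by field_simp
    rwa [← abs_mul, ← abs_mul, h]
  have hsum : |b| ≤ |a| * (|t| + |t + b / a|) := by
    have h : b = a * ((t + b / a) - t) := by field_simp; ring
    calc |b| = |a| * |(t + b / a) - t| := by rw [← abs_mul, ← h]
      _ ≤ |a| * (|t| + |t + b / a|) := by
        gcongr
        linarith [abs_sub (t + b / a) t]
  by_contra! hcon
  obtain ⟨hu, hv⟩ := hcon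
  generalize |t| = u at *
  generalize |t + b / a| = v at *
  rcases min_choice (|a| ^ (-(1 / 2) : ℝ)) |b|⁻¹ with h | h <;> rw [h] at hu hv
  · have hr : 0 < |a| ^ (-(1 / 2) : ℝ) := Real.rpow_pos_of_pos ha' _
    have hr2 : |a| * (|a| ^ (-(1 / 2) : ℝ) * |a| ^ (-(1 / 2) : ℝ)) = 1 := by
      rw [← Real.rpow_add ha']
      norm_num [Real.rpow_neg_one, ha]
    generalize |a| ^ (-(1 / 2) : ℝ) = r at *
    have h1 : r * r < u * v := by nlinarith
    nlinarith [mul_lt_mul_of_pos_left h1 ha']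
  · have hi : 0 < |b|⁻¹ := inv_pos.mpr hb'
    have hu0 : 0 < u := by linarith
    have hv0 : 0 < v := by linarith
    have hbi : |b| * |b|⁻¹ = 1 := mul_inv_cancel₀ hb'.ne'
    have hbu : 2 < |b| * u := by nlinarith
    have hbv : 2 < |b| * v := by nlinarith
    -- `|b| u v` is at most `u + v`, but exceeds both `2 u` and `2 v`.
    have h1 : |b| * (u * v) ≤ u + v := by
      calc |b| * (u * v) ≤ |a| * (u + v) * (u * v) := by gcongr
        _ = |a| * (u * v) * (u + v) := by ring
        _ ≤ 1 * (u + v) := by gcongr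
        _ = u + v := one_mul _
    nlinarith [mul_lt_mul_of_pos_right hbu hv0, mul_lt_mul_of_pos_right hbv hu0]

/-- The measure of `{t : |a t² + b t| ≤ 1}` is `O(min{|a|^{-1/2}, |b|^{-1}})`. -/
theorem measure_abs_tt_t_le :
    ∃ K : ℝ, 0 < K ∧ ∀ a b : ℝ, a ≠ 0 → b ≠ 0 →
      volume {t : ℝ | |a * t ^ 2 + b * t| ≤ 1} ≤
        ENNReal.ofReal (K * min (|a| ^ (-(1 / 2) : ℝ)) |b|⁻¹) := by
  refine ⟨8, by norm_num, fun a b ha hb => ?_⟩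
  have key := fun t => near_root_of_abs_le (t := t) ha hb
  have hm : 0 ≤ min (|a| ^ (-(1 / 2) : ℝ)) |b|⁻¹ := by positivity
  generalize min (|a| ^ (-(1 / 2) : ℝ)) |b|⁻¹ = m at *
  calc volume {t : ℝ | |a * t ^ 2 + b * t| ≤ 1}
      ≤ volume (Metric.closedBall 0 (2 * m) ∪ Metric.closedBall (-(b / a)) (2 * m)) := by
        refine measure_mono fun t ht => ?_
        simpa [Real.dist_eq] using key t ht
    _ ≤ _ := measure_union_le _ _
    _ = ENNReal.ofReal (8 * m) := by
        rw [Real.volume_closedBall, Real.volume_closedBall,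
          ← ENNReal.ofReal_add (by positivity) (by positivity)]
        ring_nf
end

section
/- There is an absolute constant K such that for all nonzero real numbers a and b, the two-dimensional Lebesgue measure of the set {(t,u) ∈ ℝ² : |a·t²·u + b·t·u²| ≤ 1} is at most K·|a·b|^{−1/3}. -/
/-!
The linear change of variables `x = a t / c`, `y = b u / c` with `c = |ab|^{1/3}` turns the set into
the fixed region `|x y (x + y)| ≤ 1`, and its determinant `ab / c²` has absolute value `|ab|^{1/3}`.
It remains to see that the fixed region has finite area. The three forms `x`, `y`, `x + y` are
linearly dependent with coefficients `±1`, so the two largest in absolute value agree up to a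
factor `2`. If `s` denotes the smallest form and `w` another one, then `|s| ≤ |w|` and
`|s| w² ≤ 2`, hence `|s| ≤ 4 / (1 + w²)` (`abs_le_of_smallest`). So the region is covered by three
strips of width `8 / (1 + w²)`, each of area `8π` (`volume_strip`).
-/

open MeasureTheory

/-- Each horizontal slice is an interval of length `8 / (1 + y²)`. -/
lemma volume_strip (k : ℝ) :
    volume {p : ℝ × ℝ | |p.1 + k * p.2| ≤ 4 * (1 + p.2 ^ 2)⁻¹} = ENNReal.ofReal (8 * Real.pi) := by
  have hm : MeasurableSet {p : ℝ × ℝ | |p.1 + k * p.2| ≤ 4 * (1 + p.2 ^ 2)⁻¹} :=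
    measurableSet_le (by fun_prop) (by fun_prop)
  rw [Measure.volume_eq_prod, Measure.prod_apply_symm hm]
  have hslice : ∀ y : ℝ,
      volume ((fun x : ℝ => (x, y)) ⁻¹' {p : ℝ × ℝ | |p.1 + k * p.2| ≤ 4 * (1 + p.2 ^ 2)⁻¹})
        = ENNReal.ofReal (8 * (1 + y ^ 2)⁻¹) := by
    intro y
    have : ((fun x : ℝ => (x, y)) ⁻¹' {p : ℝ × ℝ | |p.1 + k * p.2| ≤ 4 * (1 + p.2 ^ 2)⁻¹})
        = Set.Icc (-(4 * (1 + y ^ 2)⁻¹) - k * y) (4 * (1 + y ^ 2)⁻¹ - k * y) := by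
      ext x
      simp only [Set.mem_preimage, Set.mem_ofPred_eq, Set.mem_Icc, abs_le]
      constructor <;> rintro ⟨h1, h2⟩ <;> constructor <;> linarith
    rw [this, Real.volume_Icc]
    congr 1
    ring
  simp_rw [hslice]
  rw [← ofReal_integral_eq_lintegral_ofReal (integrable_inv_one_add_sq.const_mul 8)
    (Filter.Eventually.of_forall fun y => by positivity), integral_const_mul,
    integral_univ_inv_one_add_sq]

/-- Here `s` is the smallest in absolute value of the three forms `s`, `w`, `v`, of which `v` is
`±s ± w`; only `|w| ≤ |s| + |v|` is used of that relation. -/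
lemma abs_le_of_smallest {s w v : ℝ} (hw : |s| ≤ |w|) (hv : |s| ≤ |v|) (h : |w| ≤ |s| + |v|)
    (hp : |s| * |w| * |v| ≤ 1) : |s| ≤ 4 * (1 + w ^ 2)⁻¹ := by
  rw [← div_eq_mul_inv, le_div_iff₀ (by positivity), ← sq_abs w]
  have hs := abs_nonneg s
  have h2 : |s| * |w| ^ 2 ≤ 2 := by
    have : |s| * |w| * |w| ≤ |s| * |w| * (2 * |v|) := by gcongr; linarith
    nlinarith
  rcases le_total |w| 1 with h1 | h1
  · nlinarith
  · have : |s| * 1 ≤ |s| * |w| ^ 2 := by gcongr; nlinarith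
    nlinarith

lemma volume_model_le :
    volume {p : ℝ × ℝ | |p.1 * p.2 * (p.1 + p.2)| ≤ 1} ≤ ENNReal.ofReal (24 * Real.pi) := by
  have hsub : {p : ℝ × ℝ | |p.1 * p.2 * (p.1 + p.2)| ≤ 1} ⊆
      ({p : ℝ × ℝ | |p.1 + 0 * p.2| ≤ 4 * (1 + p.2 ^ 2)⁻¹} ∪
        Prod.swap ⁻¹' {p : ℝ × ℝ | |p.1 + 0 * p.2| ≤ 4 * (1 + p.2 ^ 2)⁻¹}) ∪
        {p : ℝ × ℝ | |p.1 + 1 * p.2| ≤ 4 * (1 + p.2 ^ 2)⁻¹} := by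
    rintro ⟨x, y⟩ h
    simp only [Set.mem_ofPred_eq, abs_mul] at h
    simp only [Set.mem_union, Set.mem_preimage, Set.mem_ofPred_eq, Prod.swap_prod_mk, zero_mul,
      add_zero, one_mul]
    have t1 : |x + y| ≤ |x| + |y| := abs_add_le x y
    have t2 : |y| ≤ |x| + |x + y| := by simpa [add_comm] using abs_sub (x + y) x
    have t3 : |x| ≤ |y| + |x + y| := by simpa [add_comm] using abs_sub (x + y) y
    by_cases hx : |x| ≤ |y| ∧ |x| ≤ |x + y|
    · exact Or.inl (Or.inl (abs_le_of_smallest hx.1 hx.2 t2 h))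
    by_cases hy : |y| ≤ |x| ∧ |y| ≤ |x + y|
    · exact Or.inl (Or.inr (abs_le_of_smallest hy.1 hy.2 t3 (by linarith)))
    · have hz : |x + y| ≤ |y| ∧ |x + y| ≤ |x| := by grind
      exact Or.inr (abs_le_of_smallest hz.1 hz.2 (by linarith) (by linarith))
  have hswap : volume (Prod.swap ⁻¹' {p : ℝ × ℝ | |p.1 + 0 * p.2| ≤ 4 * (1 + p.2 ^ 2)⁻¹})
      = ENNReal.ofReal (8 * Real.pi) := by
    rw [← volume_strip 0]
    exact (Measure.measurePreserving_swap (μ := (volume : Measure ℝ))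
      (ν := (volume : Measure ℝ))).measure_preimage
      (measurableSet_le (by fun_prop) (by fun_prop)).nullMeasurableSet
  refine (measure_mono hsub).trans ((measure_union_le _ _).trans
    ((add_le_add_left (measure_union_le _ _) _).trans ?_))
  have := Real.pi_pos
  rw [hswap, volume_strip, volume_strip, ← ENNReal.ofReal_add (by positivity) (by positivity),
    ← ENNReal.ofReal_add (by positivity) (by positivity)]
  exact ENNReal.ofReal_le_ofReal (by linarith)

/-- The measure of `{(t,u) : |a t² u + b t u²| ≤ 1}` is `O(|ab|^{-1/3})`. -/
theorem measure_abs_ttu_tuu_le :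
    ∃ K : ℝ, 0 < K ∧ ∀ a b : ℝ, a ≠ 0 → b ≠ 0 →
      volume {p : ℝ × ℝ | |a * p.1 ^ 2 * p.2 + b * p.1 * p.2 ^ 2| ≤ 1} ≤
        ENNReal.ofReal (K * |a * b| ^ (-(1 / 3) : ℝ)) := by
  refine ⟨24 * Real.pi, by positivity, fun a b ha hb => ?_⟩
  have hab : 0 < |a * b| := abs_pos.2 (mul_ne_zero ha hb)
  obtain ⟨c, hc⟩ : ∃ c : ℝ, c = |a * b| ^ (1 / 3 : ℝ) := ⟨_, rfl⟩
  have hc0 : 0 < c := hc ▸ Real.rpow_pos_of_pos hab _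
  have hc3 : c ^ 3 = |a * b| := by
    rw [hc, ← Real.rpow_natCast, ← Real.rpow_mul hab.le]
    norm_num
  let L : ℝ × ℝ →ₗ[ℝ] ℝ × ℝ :=
    ((a / c) • LinearMap.id).prodMap ((b / c) • LinearMap.id)
  have hdet : LinearMap.det L = a * b / c ^ 2 := by
    simp only [L, LinearMap.det_prodMap, LinearMap.det_smul, LinearMap.det_id,
      Module.finrank_self]
    field_simp
  have hset : {p : ℝ × ℝ | |a * p.1 ^ 2 * p.2 + b * p.1 * p.2 ^ 2| ≤ 1} =
      L ⁻¹' {p : ℝ × ℝ | |p.1 * p.2 * (p.1 + p.2)| ≤ 1} := by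
    ext ⟨t, u⟩
    have h1 : (a / c * t) * (b / c * u) * (a / c * t + b / c * u) =
        (a * b) / c ^ 3 * (a * t ^ 2 * u + b * t * u ^ 2) := by
      field_simp
    have h2 : |(a * b) / c ^ 3| = 1 := by
      rw [hc3, abs_div, abs_abs, div_self hab.ne']
    change _ ↔ |(a / c * t) * (b / c * u) * (a / c * t + b / c * u)| ≤ 1
    rw [h1, abs_mul, h2, one_mul]
    rfl
  have hdet' : |(LinearMap.det L)⁻¹| = |a * b| ^ (-(1 / 3) : ℝ) := by
    rw [hdet, Real.rpow_neg hab.le, ← hc, abs_inv, abs_div, ← hc3, abs_of_pos (pow_pos hc0 2)]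
    field_simp
  have hdet0 : LinearMap.det L ≠ 0 := by
    rw [hdet]
    positivity
  rw [hset, Measure.addHaar_preimage_linearMap _ hdet0, hdet', mul_comm (24 * Real.pi),
    ENNReal.ofReal_mul (by positivity)]
  gcongr
  exact volume_model_le
end

section
/- For every integer k > 1 there is a constant K (depending only on k) such that for all nonzero real numbers a and b, the two-dimensional Lebesgue measure of the set {(t,u) ∈ ℝ² : |a·t² + b·t·u^k| ≤ 1} is at most K·|a|^{−(k−1)/(2k)}·|b|^{−1/k}. -/
open MeasureTheory

/-!
Slice the set along `t` for fixed `u`. Dividing by `|a|`, the slice is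
`{t : |t| |t + c| ≤ 1 / |a|}` with `c = (b / a) u ^ k`. Put `q = |a| ^ (-1/2)` and
`m = min |t| |t + c|`. Then `m² ≤ q²`, and `m |c| / 2 ≤ q²` because `max |t| |t + c| ≥ |c| / 2`.
With `U` chosen so that `|c| = 2 q (|u| / U) ^ k`, and since `k ≥ 2`, both bounds together give
`m (1 + (u / U)²) ≤ 2 q` (`slice_min_bound`). So the slice lies in two intervals of total length
`8 q / (1 + (u / U)²)`, and integrating over `u` (`∫ 1 / (1 + x²) = π`) bounds the measure by
`8 π q U = 8 π 2 ^ (1/k) |a| ^ (-(k-1)/(2k)) |b| ^ (-1/k)`.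
-/

/-- One of two real numbers at distance `2 q x ^ k` whose product is at most `q ^ 2` in absolute
value is small: it decays like `(1 + x ^ 2)⁻¹`. -/
lemma slice_min_bound {k : ℕ} (hk : 1 < k) {q x t c : ℝ} (hq : 0 < q) (hx : 0 ≤ x)
    (hc : |c| = 2 * q * x ^ k) (h : |t| * |t + c| ≤ q ^ 2) :
    min |t| |t + c| ≤ 2 * q / (1 + x ^ 2) := by
  have ht := abs_nonneg t
  have htc := abs_nonneg (t + c)
  have htri : |c| ≤ |t| + |t + c| := by
    have := abs_sub (t + c) t
    rw [add_sub_cancel_left] at this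
    linarith
  set m := min |t| |t + c| with hm
  have hm0 : 0 ≤ m := le_min ht htc
  have h1 : m * m ≤ q ^ 2 ∧ m * |c| ≤ 2 * q ^ 2 := by
    rcases le_total |t| |t + c| with h' | h'
    · rw [min_eq_left h'] at hm
      rw [hm]
      constructor <;> nlinarith
    · rw [min_eq_right h'] at hm
      rw [hm]
      constructor <;> nlinarith
  have hmq : m ≤ q := by nlinarith [h1.1]
  have hmx : m * x ^ k ≤ q := by
    have h2 := h1.2
    rw [hc] at h2
    have : q * (m * x ^ k) ≤ q * q := by linarith
    exact le_of_mul_le_mul_left this hq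
  rw [le_div_iff₀ (by positivity)]
  have hmx2 : m * x ^ 2 ≤ q := by
    rcases le_total x 1 with h' | h'
    · have : x ^ 2 ≤ 1 := pow_le_one₀ hx h'
      nlinarith
    · have : x ^ 2 ≤ x ^ k := pow_le_pow_right₀ h' hk
      nlinarith
  linarith

lemma slice_volume_le {k : ℕ} (hk : 1 < k) {q x c : ℝ} (hq : 0 < q) (hx : 0 ≤ x)
    (hc : |c| = 2 * q * x ^ k) :
    volume {t : ℝ | |t| * |t + c| ≤ q ^ 2} ≤ ENNReal.ofReal (8 * q * (1 + x ^ 2)⁻¹) := by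
  set r := 2 * q / (1 + x ^ 2) with hr
  have hr0 : 0 ≤ r := by positivity
  have hsub : {t : ℝ | |t| * |t + c| ≤ q ^ 2} ⊆ Set.Icc (-r) r ∪ Set.Icc (-c - r) (-c + r) := by
    intro t ht
    rcases min_le_iff.1 (slice_min_bound hk hq hx hc ht) with h | h
    · exact Or.inl (abs_le.1 h)
    · have := abs_le.1 h
      exact Or.inr ⟨by linarith [this.1], by linarith [this.2]⟩
  refine (measure_mono hsub).trans ((measure_union_le _ _).trans ?_)
  rw [Real.volume_Icc, Real.volume_Icc, ← ENNReal.ofReal_add (by linarith) (by linarith)]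
  apply ENNReal.ofReal_le_ofReal
  apply le_of_eq
  rw [hr]
  ring

lemma lintegral_scaled_cauchy {q U : ℝ} (hq : 0 < q) (hU : 0 < U) :
    ∫⁻ u : ℝ, ENNReal.ofReal (8 * q * (1 + (|u| / U) ^ 2)⁻¹) =
      ENNReal.ofReal (8 * q * (U * Real.pi)) := by
  have hi : Integrable fun u : ℝ => (1 + (u / U) ^ 2)⁻¹ :=
    integrable_inv_one_add_sq.comp_div hU.ne'
  have habs : ∀ u : ℝ, (|u| / U) ^ 2 = (u / U) ^ 2 := fun u => by
    rw [div_pow, div_pow, sq_abs]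
  simp only [habs]
  rw [← ofReal_integral_eq_lintegral_ofReal (hi.const_mul _)
    (Filter.Eventually.of_forall fun u => by positivity), integral_const_mul,
    Measure.integral_comp_div (fun x : ℝ => (1 + x ^ 2)⁻¹) U, integral_univ_inv_one_add_sq,
    abs_of_pos hU, smul_eq_mul]

/-- For `k > 1`, the measure of `{(t,u) : |a t² + b t u^k| ≤ 1}` is
`O(|a|^{-(k-1)/(2k)} |b|^{-1/k})`. -/
theorem measure_abs_tt_tuk_le (k : ℕ) (hk : 1 < k) :
    ∃ K : ℝ, 0 < K ∧ ∀ a b : ℝ, a ≠ 0 → b ≠ 0 →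
      volume {p : ℝ × ℝ | |a * p.1 ^ 2 + b * p.1 * p.2 ^ k| ≤ 1} ≤
        ENNReal.ofReal (K * |a| ^ (-(((k : ℝ) - 1) / (2 * (k : ℝ)))) * |b| ^ (-(1 / (k : ℝ)))) := by
  refine ⟨8 * Real.pi * 2 ^ (1 / (k : ℝ)), by positivity, fun a b ha hb => ?_⟩
  have hk0 : (k : ℝ) ≠ 0 := by positivity
  have hA : 0 < |a| := abs_pos.2 ha
  have hB : 0 < |b| := abs_pos.2 hb
  set q : ℝ := |a| ^ (-(1 / 2) : ℝ) with hq
  have hq0 : 0 < q := by positivity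
  have hqa : q ^ 2 * |a| = 1 := by
    rw [hq, ← Real.rpow_natCast, ← Real.rpow_mul hA.le]
    norm_num
    rw [Real.rpow_neg_one, inv_mul_cancel₀ hA.ne']
  set U : ℝ := (2 * |a| ^ (1 / 2 : ℝ) * |b|⁻¹) ^ (1 / (k : ℝ)) with hU
  have hU0 : 0 < U := by positivity
  have hUk : U ^ k = 2 * |a| ^ (1 / 2 : ℝ) * |b|⁻¹ := by
    rw [hU, one_div (k : ℝ), Real.rpow_inv_natCast_pow (by positivity) (by omega)]
  have hqi : q * |a| ^ (1 / 2 : ℝ) = 1 := by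
    rw [hq, ← Real.rpow_add hA]
    norm_num
  have hmeas : MeasurableSet {p : ℝ × ℝ | |a * p.1 ^ 2 + b * p.1 * p.2 ^ k| ≤ 1} :=
    (isClosed_le (by fun_prop) (by fun_prop)).measurableSet
  rw [Measure.volume_eq_prod, Measure.prod_apply_symm hmeas]
  calc _ ≤ ∫⁻ u : ℝ, ENNReal.ofReal (8 * q * (1 + (|u| / U) ^ 2)⁻¹) := by
        refine lintegral_mono fun u => ?_
        have hc : |b / a * u ^ k| = 2 * q * (|u| / U) ^ k := by
          rw [div_pow, hUk, abs_mul, abs_div, abs_pow]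
          have h2 : |a| = (|a| ^ (1 / 2 : ℝ)) ^ 2 := by
            rw [← Real.rpow_natCast, ← Real.rpow_mul hA.le]
            norm_num
          have h3 : q = (|a| ^ (1 / 2 : ℝ))⁻¹ := eq_inv_of_mul_eq_one_left hqi
          have h4 : 0 < |a| ^ (1 / 2 : ℝ) := by positivity
          rw [h3]
          generalize |a| ^ (1 / 2 : ℝ) = w at *
          rw [h2]
          field_simp
        refine (measure_mono ?_).trans (slice_volume_le hk hq0 (by positivity) hc)
        intro t ht
        have ht' : |a * t ^ 2 + b * t * u ^ k| ≤ 1 := ht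
        have he : a * t ^ 2 + b * t * u ^ k = a * (t * (t + b / a * u ^ k)) := by
          field_simp
        rw [he, abs_mul, abs_mul] at ht'
        have : |a| * (|t| * |t + b / a * u ^ k|) ≤ |a| * q ^ 2 := by linarith
        exact le_of_mul_le_mul_left this hA
    _ = ENNReal.ofReal (8 * q * (U * Real.pi)) := lintegral_scaled_cauchy hq0 hU0
    _ ≤ _ := by
        apply ENNReal.ofReal_le_ofReal
        apply le_of_eq
        have h1 : U = 2 ^ (1 / (k : ℝ)) * |a| ^ (1 / 2 * (1 / (k : ℝ))) * |b| ^ (-(1 / (k : ℝ))) := by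
          rw [hU, Real.mul_rpow (by positivity) (by positivity),
            Real.mul_rpow (by positivity) (by positivity), ← Real.rpow_mul hA.le,
            Real.inv_rpow hB.le, Real.rpow_neg hB.le]
        have h2 : |a| ^ (-(((k : ℝ) - 1) / (2 * (k : ℝ)))) =
            q * |a| ^ (1 / 2 * (1 / (k : ℝ))) := by
          rw [hq, ← Real.rpow_add hA]
          congr 1
          field_simp
          ring
        rw [h1, h2]
        ring
end

section
/- Let C ≥ 1 be real and let θ : ℤ₊ → ℝ be a function such that ∑_{0 < n ≤ t} |(θ∗μ)(n)|·n ≤ t·(log(t+2))^{C−1} for all t ≥ 0. Then for every positive integer q and every integer a with gcd(a,q) = 1, the sum c₀ = ∑_{d > 0, gcd(d,q)=1} (θ∗μ)(d)/d converges, and there is a constant K depending only on C such that |∑_{0 < n ≤ t, n ≡ a (mod q)} θ(n) − c₀·t/q| ≤ K·(log(t+2))^C for all t ≥ 0. -/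
open scoped Classical

/-!
Write `f = θ ∗ μ`, so that `θ n = ∑_{d ∣ n} f d` for `n ≥ 1` by Möbius inversion.  Exchanging the
order of summation, the sum of `θ` over `n ≤ t`, `n ≡ a (mod q)` is `∑_{d ≤ t} f d * N(d)`, where
`N(d)` counts the multiples of `d` up to `t` that are `≡ a (mod q)`.  As `a` is coprime to `q`,
`N(d) = 0` unless `gcd(d, q) = 1`, in which case the two congruences combine to a single residue
class modulo `q * d` and `N(d) = t / (q d) + O(1)` (`abs_count_sub_le`).

The error is therefore at most `2 ∑_{d ≤ t} |f d| + t ∑_{d > t} |f d| / d`, and both sums are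
estimated by cutting into dyadic blocks `u < d ≤ 2u`, on each of which the hypothesis is applied at
`2u`: the first consists of `O(log (t + 2))` blocks of size `O(log (t + 2) ^ (C - 1))`
(`sum_abs_le`), while in the second the `k`-th block contributes
`O(2 ^ (-k) (k + 2) ^ (C - 1) log (t + 2) ^ (C - 1) / t)` (`sum_tail_le`).
-/

/-- The Dirichlet convolution `θ ∗ μ` of a real-valued arithmetic function with the Möbius
function. -/
noncomputable def dconv (θ : ℕ → ℝ) (n : ℕ) : ℝ :=
  ∑ d ∈ n.divisors, (ArithmeticFunction.moebius d : ℝ) * θ (n / d)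

/-- The growth hypothesis on `f = θ ∗ μ`. -/
def GrowthBound (C : ℝ) (f : ℕ → ℝ) : Prop :=
  ∀ t : ℝ, 0 ≤ t →
    ∑ n ∈ Finset.Icc 1 ⌊t⌋₊, |f n| * n ≤ t * Real.log (t + 2) ^ (C - 1)

lemma sum_divisors_dconv (θ : ℕ → ℝ) (n : ℕ) (hn : 0 < n) :
    ∑ d ∈ n.divisors, dconv θ d = θ n := by
  refine (ArithmeticFunction.sum_eq_iff_sum_mul_moebius_eq (f := dconv θ) (g := θ)).2 ?_ n hn
  intro m _
  rw [Nat.sum_divisorsAntidiagonal (fun i j => ((ArithmeticFunction.moebius i : ℤ) : ℝ) * θ j)]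
  rfl

lemma GrowthBound.sum_le {C : ℝ} {f : ℕ → ℝ} (hf : GrowthBound C f) {t : ℝ} (ht : 0 ≤ t)
    (s : Finset ℕ) (hs : ∀ d ∈ s, 0 < d ∧ (d : ℝ) ≤ t) :
    ∑ d ∈ s, |f d| * d ≤ t * Real.log (t + 2) ^ (C - 1) := by
  refine (Finset.sum_le_sum_of_subset_of_nonneg ?_ ?_).trans (hf t ht)
  · intro d hd
    exact Finset.mem_Icc.2 ⟨(hs d hd).1, Nat.le_floor (hs d hd).2⟩
  · intros; positivity

lemma log_two_le {t : ℝ} (ht : 0 ≤ t) : Real.log 2 ≤ Real.log (t + 2) :=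
  Real.log_le_log (by norm_num) (by linarith)

lemma log_pos' {t : ℝ} (ht : 0 ≤ t) : 0 < Real.log (t + 2) :=
  Real.log_pos (by linarith)

/-- Induction on the number `k` of dyadic blocks below `t`. -/
lemma sum_abs_le_aux {C : ℝ} (hC : 1 ≤ C) {f : ℕ → ℝ} (hf : GrowthBound C f) (k : ℕ) :
    ∀ (t : ℝ), 0 ≤ t → t < 2 ^ k → ∀ s : Finset ℕ, (∀ d ∈ s, 0 < d ∧ (d : ℝ) ≤ t) →
      ∑ d ∈ s, |f d| ≤ 2 * k * Real.log (t + 2) ^ (C - 1) := by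
  induction k with
  | zero =>
    intro t ht htk s hs
    have : s = ∅ := by
      refine Finset.eq_empty_of_forall_notMem fun d hd => ?_
      obtain ⟨h1, h2⟩ := hs d hd
      have : (1 : ℝ) ≤ d := by exact_mod_cast h1
      norm_num at htk
      linarith
    simp [this]
  | succ k ih =>
    intro t ht htk s hs
    rcases ht.eq_or_lt with rfl | ht0
    · have : s = ∅ := by
        refine Finset.eq_empty_of_forall_notMem fun d hd => ?_
        obtain ⟨h1, h2⟩ := hs d hd
        have : (1 : ℝ) ≤ d := by exact_mod_cast h1
        linarith
      simp only [this, Finset.sum_empty]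
      have := log_pos' (le_refl (0 : ℝ))
      positivity
    rw [← Finset.sum_filter_add_sum_filter_not s (fun d : ℕ => (d : ℝ) ≤ t / 2)]
    have h1 := ih (t / 2) (by positivity) (by rw [pow_succ] at htk; linarith)
      (s.filter (fun d : ℕ => (d : ℝ) ≤ t / 2))
      (fun d hd => ⟨(hs d (Finset.mem_filter.1 hd).1).1, (Finset.mem_filter.1 hd).2⟩)
    have h2 : Real.log (t / 2 + 2) ^ (C - 1) ≤ Real.log (t + 2) ^ (C - 1) :=
      Real.rpow_le_rpow (log_pos' (by positivity)).le
        (Real.log_le_log (by positivity) (by linarith)) (by linarith)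
    have h3 : ∑ d ∈ s.filter (fun d : ℕ => ¬ (d : ℝ) ≤ t / 2), |f d| ≤
        2 * Real.log (t + 2) ^ (C - 1) := by
      calc _ ≤ ∑ d ∈ s.filter (fun d : ℕ => ¬ (d : ℝ) ≤ t / 2), (2 / t) * (|f d| * d) := by
            refine Finset.sum_le_sum fun d hd => ?_
            have hd := not_le.1 (Finset.mem_filter.1 hd).2
            have : 1 ≤ 2 / t * d := by
              rw [div_mul_eq_mul_div, le_div_iff₀ ht0]; linarith
            nlinarith [abs_nonneg (f d)]
        _ = (2 / t) * ∑ d ∈ s.filter (fun d : ℕ => ¬ (d : ℝ) ≤ t / 2), |f d| * d := by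
            rw [Finset.mul_sum]
        _ ≤ (2 / t) * (t * Real.log (t + 2) ^ (C - 1)) := by
            gcongr
            exact hf.sum_le ht _ fun d hd => hs d (Finset.mem_filter.1 hd).1
        _ = _ := by field_simp
    have h4 : 2 * k * Real.log (t / 2 + 2) ^ (C - 1) ≤ 2 * k * Real.log (t + 2) ^ (C - 1) := by
      gcongr
    push_cast
    linarith

lemma sum_abs_le {C : ℝ} (hC : 1 ≤ C) {f : ℕ → ℝ} (hf : GrowthBound C f) {t : ℝ} (ht : 0 ≤ t) :
    ∑ d ∈ Finset.Icc 1 ⌊t⌋₊, |f d| ≤ 4 / Real.log 2 * Real.log (t + 2) ^ C := by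
  have hl2 : 0 < Real.log 2 := Real.log_pos (by norm_num)
  have hL := log_pos' ht
  -- `k = ⌊log₂ (t + 2)⌋ + 1` blocks suffice, and `k ≤ 2 log₂ (t + 2)`.
  set k := ⌊Real.log (t + 2) / Real.log 2⌋₊ + 1 with hk
  have hkt : t < 2 ^ k := by
    have h1 : Real.log (t + 2) / Real.log 2 < k := by
      rw [hk]; push_cast; exact Nat.lt_floor_add_one _
    have h2 : Real.log (t + 2) < Real.log (2 ^ k) := by
      rw [Real.log_pow]; rwa [div_lt_iff₀ hl2] at h1
    have := (Real.log_lt_log_iff (by positivity) (by positivity)).1 h2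
    linarith
  have hk2 : (k : ℝ) ≤ 2 * (Real.log (t + 2) / Real.log 2) := by
    have h1 : (1 : ℝ) ≤ Real.log (t + 2) / Real.log 2 := by
      rw [le_div_iff₀ hl2]; linarith [log_two_le ht]
    have h2 := Nat.floor_le (zero_le_one.trans h1)
    rw [hk]; push_cast; linarith
  have h := sum_abs_le_aux hC hf k t ht hkt (Finset.Icc 1 ⌊t⌋₊) (fun d hd => by
    rw [Finset.mem_Icc] at hd
    exact ⟨hd.1, (Nat.le_floor_iff ht).1 hd.2⟩)
  refine h.trans ?_
  have hpow : Real.log (t + 2) ^ C = Real.log (t + 2) ^ (C - 1) * Real.log (t + 2) := by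
    rw [← Real.rpow_add_one hL.ne']; congr 1; ring
  rw [hpow]
  calc 2 * k * Real.log (t + 2) ^ (C - 1)
      ≤ 2 * (2 * (Real.log (t + 2) / Real.log 2)) * Real.log (t + 2) ^ (C - 1) := by gcongr
    _ = _ := by field_simp; ring

/-- The relative weight of the `k`-th dyadic block beyond `t` in `∑_{d > t} |f d| / d`. -/
noncomputable def blockWeight (C : ℝ) (k : ℕ) : ℝ := (1 / 2) ^ k * ((k : ℝ) + 2) ^ (C - 1)

lemma blockWeight_nonneg (C : ℝ) (k : ℕ) : 0 ≤ blockWeight C k := by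
  unfold blockWeight; positivity

lemma summable_blockWeight (C : ℝ) : Summable (blockWeight C) := by
  have h := summable_pow_mul_geometric_of_norm_lt_one (R := ℝ) ⌈C - 1⌉₊ (r := 1 / 2)
    (by norm_num)
  have h' := ((summable_nat_add_iff 2).2 h).mul_left 4
  refine Summable.of_nonneg_of_le (blockWeight_nonneg C) (fun k => ?_) h'
  have h1 : ((k : ℝ) + 2) ^ (C - 1) ≤ ((k : ℝ) + 2) ^ ⌈C - 1⌉₊ := by
    rw [← Real.rpow_natCast]
    exact Real.rpow_le_rpow_of_exponent_le (by linarith [(Nat.cast_nonneg k : (0 : ℝ) ≤ k)])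
      (Nat.le_ceil _)
  unfold blockWeight
  push_cast
  calc (1 / 2 : ℝ) ^ k * ((k : ℝ) + 2) ^ (C - 1)
      ≤ (1 / 2 : ℝ) ^ k * ((k : ℝ) + 2) ^ ⌈C - 1⌉₊ := by gcongr
    _ = _ := by rw [pow_add]; ring

lemma log_dyadic_le {t : ℝ} (ht : 0 ≤ t) (k : ℕ) :
    Real.log (2 ^ (k + 1) * t + 2) ≤ (k + 2) * Real.log (t + 2) := by
  have h1 : Real.log (2 ^ (k + 1) * t + 2) ≤ Real.log (2 ^ (k + 1) * (t + 2)) := by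
    refine Real.log_le_log (by positivity) ?_
    have : (1 : ℝ) ≤ 2 ^ (k + 1) := one_le_pow₀ (by norm_num)
    linarith
  rw [Real.log_mul (by positivity) (by positivity), Real.log_pow] at h1
  have := mul_le_mul_of_nonneg_left (log_two_le ht) (Nat.cast_nonneg (α := ℝ) (k + 1))
  push_cast at h1 this
  linarith

lemma sum_tail_le_aux {C : ℝ} (hC : 1 ≤ C) {f : ℕ → ℝ} (hf : GrowthBound C f) {t : ℝ}
    (ht : 0 < t) (M : ℕ) :
    ∀ s : Finset ℕ, (∀ d ∈ s, t < (d : ℝ) ∧ (d : ℝ) ≤ 2 ^ M * t) →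
      ∑ d ∈ s, |f d| / d ≤
        2 / t * Real.log (t + 2) ^ (C - 1) * ∑ k ∈ Finset.range M, blockWeight C k := by
  induction M with
  | zero =>
    intro s hs
    have : s = ∅ := by
      refine Finset.eq_empty_of_forall_notMem fun d hd => ?_
      obtain ⟨h1, h2⟩ := hs d hd
      norm_num at h2
      linarith
    simp [this]
  | succ M ih =>
    intro s hs
    have hL := log_pos' ht.le
    rw [← Finset.sum_filter_add_sum_filter_not s (fun d : ℕ => (d : ℝ) ≤ 2 ^ M * t),
      Finset.sum_range_succ, mul_add]
    refine add_le_add (ih _ fun d hd => ?_) ?_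
    · rw [Finset.mem_filter] at hd
      exact ⟨(hs d hd.1).1, hd.2⟩
    have hu : 0 < 2 ^ M * t := by positivity
    calc _ ≤ ∑ d ∈ s.filter (fun d : ℕ => ¬ (d : ℝ) ≤ 2 ^ M * t),
            (1 / (2 ^ M * t) ^ 2) * (|f d| * d) := by
          refine Finset.sum_le_sum fun d hd => ?_
          have hd := not_le.1 (Finset.mem_filter.1 hd).2
          have hd0 : (0 : ℝ) < d := hu.trans hd
          have : 1 / (d : ℝ) ^ 2 ≤ 1 / (2 ^ M * t) ^ 2 := by gcongr
          calc |f d| / d = 1 / (d : ℝ) ^ 2 * (|f d| * d) := by field_simp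
            _ ≤ _ := by gcongr
      _ = (1 / (2 ^ M * t) ^ 2) *
            ∑ d ∈ s.filter (fun d : ℕ => ¬ (d : ℝ) ≤ 2 ^ M * t), |f d| * d := by
          rw [Finset.mul_sum]
      _ ≤ (1 / (2 ^ M * t) ^ 2) *
            ((2 ^ (M + 1) * t) * Real.log (2 ^ (M + 1) * t + 2) ^ (C - 1)) := by
          gcongr
          refine hf.sum_le (by positivity) _ fun d hd => ?_
          rw [Finset.mem_filter] at hd
          have := hs d hd.1
          exact ⟨by exact_mod_cast ht.trans this.1, this.2⟩
      _ ≤ (1 / (2 ^ M * t) ^ 2) *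
            ((2 ^ (M + 1) * t) * ((M + 2) * Real.log (t + 2)) ^ (C - 1)) := by
          gcongr
          · exact (log_pos' (by positivity)).le
          · exact log_dyadic_le ht.le M
      _ = _ := by
          rw [Real.mul_rpow (by positivity) hL.le]
          unfold blockWeight
          rw [one_div_pow]
          field_simp
          ring

lemma sum_tail_le {C : ℝ} (hC : 1 ≤ C) {f : ℕ → ℝ} (hf : GrowthBound C f) {t : ℝ}
    (ht : 0 < t) (s : Finset ℕ) (hs : ∀ d ∈ s, t < (d : ℝ)) :
    ∑ d ∈ s, |f d| / d ≤ 2 / t * Real.log (t + 2) ^ (C - 1) * ∑' k, blockWeight C k := by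
  obtain ⟨M, hM⟩ := pow_unbounded_of_one_lt ((s.sup id : ℕ) / t : ℝ) (one_lt_two (α := ℝ))
  have hL := log_pos' ht.le
  refine (sum_tail_le_aux hC hf ht M s fun d hd => ⟨hs d hd, ?_⟩).trans ?_
  · rw [div_lt_iff₀ ht] at hM
    have : (d : ℝ) ≤ (s.sup id : ℕ) := by exact_mod_cast Finset.le_sup (f := id) hd
    linarith
  · gcongr
    exact (summable_blockWeight C).sum_le_tsum _ fun k _ => blockWeight_nonneg C k

/-- The number of `n ≤ t` with `d ∣ n` and `n ≡ a (mod q)` is zero if `gcd(d, q) > 1`, and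
`t / (q d) + O(1)` if `gcd(d, q) = 1`. -/
lemma abs_count_sub_le {q : ℕ} {a : ℤ} (hq : 0 < q) (ha : Int.gcd a q = 1) {t : ℝ} (ht : 0 ≤ t)
    {d : ℕ} (hd : 0 < d) :
    |((((Finset.Icc 1 ⌊t⌋₊).filter
        (fun n : ℕ => (n : ℤ) % (q : ℤ) = a % (q : ℤ))).filter (fun n => d ∣ n)).card : ℝ) -
      (if Nat.gcd d q = 1 then t / (q * d) else 0)| ≤ 2 := by
  rw [Finset.filter_filter]
  split_ifs with h
  · obtain ⟨b, hb⟩ : ∃ b : ℕ, (b : ℤ) = a % q :=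
      ⟨(a % q).toNat, Int.toNat_of_nonneg (Int.emod_nonneg _ (by exact_mod_cast hq.ne'))⟩
    have hco : Nat.Coprime q d := (Nat.coprime_comm.1 h)
    set v := Nat.chineseRemainder hco b 0 with hv
    have hset : (Finset.Icc 1 ⌊t⌋₊).filter
        (fun n : ℕ => (n : ℤ) % (q : ℤ) = a % (q : ℤ) ∧ d ∣ n) =
        (Finset.Ioc 0 ⌊t⌋₊).filter (fun n => n ≡ (v : ℕ) [MOD q * d]) := by
      ext n
      simp only [Finset.mem_filter, Finset.mem_Icc, Finset.mem_Ioc, Nat.succ_le_iff]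
      refine and_congr Iff.rfl ?_
      rw [← Nat.modEq_and_modEq_iff_modEq_mul hco]
      have e1 : (n : ℤ) % (q : ℤ) = a % (q : ℤ) ↔ n ≡ b [MOD q] := by
        rw [← Int.natCast_modEq_iff, Int.ModEq, hb, Int.emod_emod]
      have e2 : d ∣ n ↔ n ≡ 0 [MOD d] := (Nat.modEq_zero_iff_dvd).symm
      rw [e1, e2]
      exact and_congr ⟨fun h => h.trans v.2.1.symm, fun h => h.trans v.2.1⟩
        ⟨fun h => h.trans v.2.2.symm, fun h => h.trans v.2.2⟩
    have hm : 0 < q * d := Nat.mul_pos hq hd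
    have hcard := Nat.Ioc_filter_modEq_card 0 ⌊t⌋₊ hm (v : ℕ)
    rw [hset]
    set c := ((Finset.Ioc 0 ⌊t⌋₊).filter (fun n => n ≡ (v : ℕ) [MOD q * d])).card with hc
    set N := ⌊t⌋₊
    have hmono : ⌊(((0 : ℕ) : ℚ) - (v : ℕ)) / ((q * d : ℕ) : ℚ)⌋ ≤
        ⌊((N : ℚ) - (v : ℕ)) / ((q * d : ℕ) : ℚ)⌋ := by
      apply Int.floor_le_floor
      gcongr
      exact Nat.zero_le _
    rw [max_eq_left (by linarith)] at hcard
    have hcq : (c : ℚ) = ((⌊((N : ℚ) - (v : ℕ)) / ((q * d : ℕ) : ℚ)⌋ : ℤ) : ℚ) -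
        ((⌊(((0 : ℕ) : ℚ) - (v : ℕ)) / ((q * d : ℕ) : ℚ)⌋ : ℤ) : ℚ) := by
      exact_mod_cast hcard
    have f1 := Int.floor_le (((N : ℚ) - (v : ℕ)) / ((q * d : ℕ) : ℚ))
    have f2 := Int.lt_floor_add_one (((N : ℚ) - (v : ℕ)) / ((q * d : ℕ) : ℚ))
    have f3 := Int.floor_le ((((0 : ℕ) : ℚ) - (v : ℕ)) / ((q * d : ℕ) : ℚ))
    have f4 := Int.lt_floor_add_one ((((0 : ℕ) : ℚ) - (v : ℕ)) / ((q * d : ℕ) : ℚ))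
    have f5 : ((N : ℚ) - (v : ℕ)) / ((q * d : ℕ) : ℚ) -
        (((0 : ℕ) : ℚ) - (v : ℕ)) / ((q * d : ℕ) : ℚ) = (N : ℚ) / ((q * d : ℕ) : ℚ) := by
      rw [← sub_div]; congr 1; push_cast; ring
    have g1 : (c : ℚ) ≤ (N : ℚ) / ((q * d : ℕ) : ℚ) + 1 := by linarith
    have g2 : (N : ℚ) / ((q * d : ℕ) : ℚ) ≤ (c : ℚ) + 1 := by linarith
    have g1' : (c : ℝ) ≤ (N : ℝ) / ((q * d : ℕ) : ℝ) + 1 := by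
      have := (Rat.cast_le (K := ℝ)).2 g1
      push_cast at this ⊢
      exact this
    have g2' : (N : ℝ) / ((q * d : ℕ) : ℝ) ≤ (c : ℝ) + 1 := by
      have := (Rat.cast_le (K := ℝ)).2 g2
      push_cast at this ⊢
      exact this
    have hmR : (1 : ℝ) ≤ ((q * d : ℕ) : ℝ) := by exact_mod_cast hm
    have n1 : (N : ℝ) ≤ t := Nat.floor_le ht
    have n2 : t < N + 1 := Nat.lt_floor_add_one t
    have k1 : (N : ℝ) / ((q * d : ℕ) : ℝ) ≤ t / ((q * d : ℕ) : ℝ) := by gcongr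
    have k2 : t / ((q * d : ℕ) : ℝ) ≤ (N : ℝ) / ((q * d : ℕ) : ℝ) + 1 := by
      rw [div_add_one (by positivity)]
      gcongr
      linarith
    rw [← Nat.cast_mul, abs_le]
    constructor <;> linarith
  · have : (Finset.Icc 1 ⌊t⌋₊).filter
        (fun n : ℕ => (n : ℤ) % (q : ℤ) = a % (q : ℤ) ∧ d ∣ n) = ∅ := by
      refine Finset.filter_eq_empty_iff.2 fun n _ hn => h ?_
      have h1 : ((Nat.gcd d q : ℕ) : ℤ) ∣ q := by exact_mod_cast Nat.gcd_dvd_right d q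
      have h2 : ((Nat.gcd d q : ℕ) : ℤ) ∣ n := by
        exact_mod_cast (Nat.gcd_dvd_left d q).trans hn.2
      have h3 : ((Nat.gcd d q : ℕ) : ℤ) ∣ a := by
        have : (q : ℤ) ∣ a - n := Int.ModEq.dvd (a := (n : ℤ)) hn.1
        simpa using (h1.trans this).add h2
      have h4 := Int.dvd_coe_gcd h3 h1
      rw [ha] at h4
      exact Nat.dvd_one.1 (by exact_mod_cast h4)
    simp [this]

lemma sum_eq_sum_count (θ : ℕ → ℝ) (N : ℕ) (P : ℕ → Prop) [DecidablePred P] :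
    ∑ n ∈ (Finset.Icc 1 N).filter P, θ n =
      ∑ d ∈ Finset.Icc 1 N,
        dconv θ d * (((Finset.Icc 1 N).filter P).filter (fun n => d ∣ n)).card := by
  calc _ = ∑ n ∈ (Finset.Icc 1 N).filter P, ∑ d ∈ n.divisors, dconv θ d := by
        refine Finset.sum_congr rfl fun n hn => (sum_divisors_dconv θ n ?_).symm
        exact (Finset.mem_Icc.1 (Finset.mem_filter.1 hn).1).1
    _ = ∑ d ∈ Finset.Icc 1 N,
          ∑ n ∈ ((Finset.Icc 1 N).filter P).filter (fun n => d ∣ n), dconv θ d := by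
        refine Finset.sum_comm' fun n d => ?_
        simp only [Finset.mem_filter, Finset.mem_Icc, Nat.mem_divisors]
        constructor
        · rintro ⟨⟨⟨h1, h2⟩, h3⟩, h4, h5⟩
          exact ⟨⟨⟨⟨h1, h2⟩, h3⟩, h4⟩, Nat.pos_of_dvd_of_pos h4 h1,
            (Nat.le_of_dvd h1 h4).trans h2⟩
        · rintro ⟨⟨⟨⟨h1, h2⟩, h3⟩, h4⟩, h5⟩
          exact ⟨⟨⟨h1, h2⟩, h3⟩, h4, by lia⟩
    _ = _ := by
        refine Finset.sum_congr rfl fun d _ => ?_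
        rw [Finset.sum_const, nsmul_eq_mul, mul_comm]

/-- If `∑_{0 < n ≤ t} |(θ∗μ)(n)| n ≤ t (log(t+2))^{C-1}`, then for coprime `a, q` the sum
`c₀ = ∑_{gcd(d,q)=1} (θ∗μ)(d)/d` converges and
`∑_{0 < n ≤ t, n ≡ a mod q} θ(n) = c₀ t/q + O_C((log(t+2))^C)`. -/
theorem sum_arithmetic (C : ℝ) (hC : 1 ≤ C) :
    ∃ K : ℝ, 0 < K ∧
      ∀ θ : ℕ → ℝ,
        (∀ t : ℝ, 0 ≤ t →
          ∑ n ∈ Finset.Icc 1 ⌊t⌋₊, |dconv θ n| * n ≤ t * Real.log (t + 2) ^ (C - 1)) →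
        ∀ (q : ℕ) (a : ℤ), 0 < q → Int.gcd a q = 1 →
          ∃ c₀ : ℝ,
            HasSum (fun d : ℕ => if 0 < d ∧ Nat.gcd d q = 1 then dconv θ d / d else 0) c₀ ∧
            ∀ t : ℝ, 0 ≤ t →
              |(∑ n ∈ (Finset.Icc 1 ⌊t⌋₊).filter
                    (fun n : ℕ => (n : ℤ) % (q : ℤ) = a % (q : ℤ)), θ n) -
                  c₀ * t / q| ≤ K * Real.log (t + 2) ^ C := by
  have hl2 : 0 < Real.log 2 := Real.log_pos (by norm_num)
  set A := ∑' k, blockWeight C k with hA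
  have hA0 : 0 ≤ A := tsum_nonneg (blockWeight_nonneg C)
  refine ⟨8 / Real.log 2 + 2 * A / Real.log 2, by positivity, ?_⟩
  intro θ hθ q a hq ha
  have hf : GrowthBound C (dconv θ) := hθ
  set h : ℕ → ℝ := fun d : ℕ => if 0 < d ∧ Nat.gcd d q = 1 then dconv θ d / d else 0 with hh
  have habs : ∀ d, |h d| ≤ |dconv θ d| / d := by
    intro d
    simp only [hh]
    split_ifs
    · rw [abs_div, Nat.abs_cast]
    · rw [abs_zero]; positivity
  have htail : ∀ t : ℝ, 0 < t → ∀ s : Finset ℕ, (∀ d ∈ s, t < (d : ℝ)) →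
      ∑ d ∈ s, |h d| ≤ 2 / t * Real.log (t + 2) ^ (C - 1) * A := fun t ht s hs =>
    (Finset.sum_le_sum fun d _ => habs d).trans (sum_tail_le hC hf ht s hs)
  have hsum : Summable h := by
    refine Summable.of_norm ?_
    -- Every positive integer exceeds `1 / 2`, so the tail bound at `1 / 2` covers the whole series.
    refine summable_of_sum_le (c := 2 / (1 / 2) * Real.log (1 / 2 + 2) ^ (C - 1) * A)
      (fun _ => norm_nonneg _) fun s => ?_
    rw [← Finset.sum_filter_add_sum_filter_not s (fun d => 0 < d),
      Finset.sum_eq_zero (s := s.filter (fun d => ¬ 0 < d)), add_zero]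
    · refine htail (1 / 2) (by norm_num) _ fun d hd => ?_
      have : (1 : ℝ) ≤ d := by exact_mod_cast (Finset.mem_filter.1 hd).2
      linarith
    · intro d hd
      simp [hh, (Finset.mem_filter.1 hd).2]
  refine ⟨_, hsum.hasSum, fun t ht => ?_⟩
  set c₀ := ∑' d, h d with hc₀
  have hL := log_pos' ht
  rcases ht.eq_or_lt with rfl | ht0
  · simp only [Nat.floor_zero, mul_zero, zero_div, sub_zero]
    rw [show Finset.Icc 1 0 = (∅ : Finset ℕ) from rfl]
    simp only [Finset.filter_empty, Finset.sum_empty, abs_zero]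
    positivity
  have hqR : (1 : ℝ) ≤ q := by exact_mod_cast hq
  set N := ⌊t⌋₊ with hN
  have hc : |c₀ - ∑ d ∈ Finset.Icc 1 N, h d| ≤
      2 / t * Real.log (t + 2) ^ (C - 1) * A := by
    have hlim : Filter.Tendsto (fun s : Finset ℕ => |∑ d ∈ s, h d - ∑ d ∈ Finset.Icc 1 N, h d|)
        Filter.atTop (nhds |c₀ - ∑ d ∈ Finset.Icc 1 N, h d|) :=
      (Filter.Tendsto.sub_const hsum.hasSum _).abs
    refine le_of_tendsto hlim ?_
    filter_upwards [Filter.eventually_ge_atTop (Finset.Icc 1 N)] with s hs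
    rw [← Finset.sum_sdiff hs, add_sub_cancel_right]
    refine (Finset.abs_sum_le_sum_abs _ _).trans ?_
    rw [← Finset.sum_filter_add_sum_filter_not _ (fun d => 0 < d),
      Finset.sum_eq_zero (s := Finset.filter (fun d => ¬ 0 < d) _), add_zero]
    · refine htail t ht0 _ fun d hd => ?_
      simp only [Finset.mem_filter, Finset.mem_sdiff, Finset.mem_Icc, not_and] at hd
      exact (Nat.floor_lt ht).1 (not_le.1 (hd.1.2 hd.2))
    · intro d hd
      simp [hh, (Finset.mem_filter.1 hd).2]
  rw [sum_eq_sum_count]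
  set cnt : ℕ → ℝ := fun d => ((((Finset.Icc 1 N).filter
        (fun n : ℕ => (n : ℤ) % (q : ℤ) = a % (q : ℤ))).filter (fun n => d ∣ n)).card : ℝ)
    with hcnt
  have hmain : |∑ d ∈ Finset.Icc 1 N, dconv θ d * cnt d -
      (∑ d ∈ Finset.Icc 1 N, h d) * (t / q)| ≤ 2 * (4 / Real.log 2 * Real.log (t + 2) ^ C) := by
    rw [Finset.sum_mul, ← Finset.sum_sub_distrib]
    refine (Finset.abs_sum_le_sum_abs _ _).trans ?_
    refine le_trans ?_ (mul_le_mul_of_nonneg_left (sum_abs_le hC hf ht) zero_le_two)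
    rw [Finset.mul_sum]
    refine Finset.sum_le_sum fun d hd => ?_
    have hd0 : 0 < d := (Finset.mem_Icc.1 hd).1
    have hcount := abs_count_sub_le hq ha ht hd0
    have heq : dconv θ d * cnt d - h d * (t / q) =
        dconv θ d * (cnt d - (if Nat.gcd d q = 1 then t / (q * d) else 0)) := by
      simp only [hh, hd0, true_and]
      split_ifs
      · field_simp
      · ring
    rw [heq, abs_mul, mul_comm]
    exact mul_le_mul_of_nonneg_right hcount (abs_nonneg _)
  have htq : |(c₀ - ∑ d ∈ Finset.Icc 1 N, h d) * (t / q)| ≤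
      2 * A / Real.log 2 * Real.log (t + 2) ^ C := by
    rw [abs_mul, abs_of_nonneg (by positivity : 0 ≤ t / q)]
    have hpow : Real.log (t + 2) ^ C = Real.log (t + 2) ^ (C - 1) * Real.log (t + 2) := by
      rw [← Real.rpow_add_one hL.ne']; congr 1; ring
    calc _ ≤ (2 / t * Real.log (t + 2) ^ (C - 1) * A) * t := by
          gcongr
          exact div_le_self ht hqR
      _ = 2 * A / Real.log 2 * (Real.log (t + 2) ^ (C - 1) * Real.log 2) := by field_simp
      _ ≤ 2 * A / Real.log 2 * (Real.log (t + 2) ^ (C - 1) * Real.log (t + 2)) := by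
          gcongr
          linarith
      _ = _ := by rw [hpow]
  calc _ = |(∑ d ∈ Finset.Icc 1 N, dconv θ d * cnt d -
        (∑ d ∈ Finset.Icc 1 N, h d) * (t / q)) -
        (c₀ - ∑ d ∈ Finset.Icc 1 N, h d) * (t / q)| := by
        congr 1; ring
    _ ≤ _ := abs_sub _ _
    _ ≤ _ := add_le_add hmain htq
    _ = _ := by ring
end

section
/- Let θ : ℤ₊ → ℝ be non-negative, represented as θ(n) = c·∏_{p^ν ∥ n} A_p(ν) · ∏_{p ∤ n} A_p(0) for a real number c and non-negative functions A_p : ℕ → ℝ for each prime p, where for each n the infinite product ∏_{p ∤ n} A_p(0) converges in the sense that the partial products of its nonzero factors converge to a nonzero limit (the product being 0 if some factor vanishes). Suppose θ is not identically zero. Then for every positive integer n, the Dirichlet convolution satisfies (θ∗μ)(n) = c·∏_{p ∤ n} A_p(0) · ∏_{p^ν ∥ n} (A_p(ν) − A_p(ν−1)). -/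
/-- `θ` is represented by the constant `c` and the local data `A` in the sense that
`θ(n) = c · ∏_{p^ν ∥ n} A_p(ν) · ∏_{p ∤ n} A_p(0)`, the infinite product over the primes not
dividing `n` being convergent. -/
def EulerRep (θ : ℕ → ℝ) (c : ℝ) (A : ℕ → ℕ → ℝ) : Prop :=
  (∀ p ν : ℕ, p.Prime → 0 ≤ A p ν) ∧
  (∀ n : ℕ, 0 < n → Multipliable (fun p : {p : ℕ // p.Prime ∧ ¬ p ∣ n} => A p.1 0)) ∧
  (∀ n : ℕ, 0 < n →
    θ n = c * (∏ p ∈ n.primeFactors, A p (n.factorization p)) *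
      ∏' p : {p : ℕ // p.Prime ∧ ¬ p ∣ n}, A p.1 0)

/-- The infinite product attached to a divisor `m` of `n` differs from the one attached to `n` by
the finitely many factors at the primes dividing `n` but not `m`. -/
lemma tprod_not_dvd_of_dvd (f : ℕ → ℝ) {m n : ℕ} (hn : n ≠ 0) (hmn : m ∣ n)
    (hf : Multipliable (fun p : {p : ℕ // p.Prime ∧ ¬ p ∣ n} => f p.1)) :
    ∏' p : {p : ℕ // p.Prime ∧ ¬ p ∣ m}, f p.1 =
      (∏ p ∈ n.primeFactors \ m.primeFactors, f p) *
        ∏' p : {p : ℕ // p.Prime ∧ ¬ p ∣ n}, f p.1 := by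
  have hm : m ≠ 0 := fun h => hn (by simpa [h] using hmn)
  have hunion : {p : ℕ | p.Prime ∧ ¬ p ∣ m} =
      ↑(n.primeFactors \ m.primeFactors) ∪ {p : ℕ | p.Prime ∧ ¬ p ∣ n} := by
    ext p
    have := fun h : p ∣ m => h.trans hmn
    simp only [Set.mem_ofPred_eq, Set.mem_union, Finset.mem_coe, Finset.mem_sdiff,
      Nat.mem_primeFactors]
    tauto
  have hdisj : Disjoint (↑(n.primeFactors \ m.primeFactors) : Set ℕ)
      {p : ℕ | p.Prime ∧ ¬ p ∣ n} := by
    rw [Set.disjoint_left]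
    intro p hp hp'
    simp only [Finset.mem_coe, Finset.mem_sdiff, Nat.mem_primeFactors] at hp
    exact hp'.2 hp.1.2.1
  have hprod := (Finset.hasProd (n.primeFactors \ m.primeFactors) f).mul_disjoint hdisj
    (show HasProd (f ∘ (↑) : {p : ℕ | p.Prime ∧ ¬ p ∣ n} → ℝ) _ from hf.hasProd)
  rw [← hunion] at hprod
  exact hprod.tprod_eq

lemma EulerRep.apply_of_dvd {θ : ℕ → ℝ} {c : ℝ} {A : ℕ → ℕ → ℝ} (hrep : EulerRep θ c A)
    {m n : ℕ} (hn : n ≠ 0) (hmn : m ∣ n) :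
    θ m = c * (∏' p : {p : ℕ // p.Prime ∧ ¬ p ∣ n}, A p.1 0) *
      ∏ p ∈ n.primeFactors, A p (m.factorization p) := by
  obtain ⟨-, hmult, hθ⟩ := hrep
  rw [hθ m (Nat.pos_of_dvd_of_pos hmn (Nat.pos_of_ne_zero hn)),
    tprod_not_dvd_of_dvd (fun p => A p 0) hn hmn (hmult n (Nat.pos_of_ne_zero hn)),
    ← Finset.prod_sdiff (Nat.primeFactors_mono hmn hn)]
  have hzero : ∏ p ∈ n.primeFactors \ m.primeFactors, A p (m.factorization p) =
      ∏ p ∈ n.primeFactors \ m.primeFactors, A p 0 := by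
    refine Finset.prod_congr rfl fun p hp => ?_
    rw [Finset.mem_sdiff, ← Nat.support_factorization m, Finsupp.notMem_support_iff] at hp
    rw [hp.2]
  rw [hzero]
  ring

lemma factorization_prod_of_subset_primeFactors {n : ℕ} {t : Finset ℕ} (ht : t ⊆ n.primeFactors)
    (p : ℕ) : (∏ q ∈ t, q).factorization p = if p ∈ t then 1 else 0 := by
  have hprime : ∀ q ∈ t, q.Prime := fun q hq => Nat.prime_of_mem_primeFactors (ht hq)
  rw [Nat.factorization_prod_apply fun q hq => (hprime q hq).ne_zero,
    Finset.sum_congr rfl fun q hq => by rw [(hprime q hq).factorization, Finsupp.single_apply],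
    Finset.sum_ite_eq' t p fun _ => 1]

/-- The Möbius sum of a product of local factors is the product of their differences. -/
lemma sum_moebius_mul_prod (A : ℕ → ℕ → ℝ) {n : ℕ} (hn : n ≠ 0) :
    ∑ d ∈ n.divisors, (ArithmeticFunction.moebius d : ℝ) *
        ∏ p ∈ n.primeFactors, A p ((n / d).factorization p) =
      ∏ p ∈ n.primeFactors, (A p (n.factorization p) - A p (n.factorization p - 1)) := by
  have hfactors : (UniqueFactorizationMonoid.normalizedFactors n).toFinset = n.primeFactors := by
    rw [Nat.factors_eq]
    rfl
  have hsquarefree : ∀ d ∈ n.divisors, (ArithmeticFunction.moebius d : ℝ) *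
      ∏ p ∈ n.primeFactors, A p ((n / d).factorization p) ≠ 0 → Squarefree d := by
    intro d _ hd
    by_contra hsq
    simp [ArithmeticFunction.moebius_eq_zero_of_not_squarefree hsq] at hd
  rw [← Finset.sum_filter_of_ne hsquarefree, Nat.sum_divisors_filter_squarefree hn, hfactors]
  simp_rw [sub_eq_neg_add]
  rw [Finset.prod_add]
  refine Finset.sum_congr rfl fun t ht => ?_
  rw [Finset.mem_powerset] at ht
  have hval : t.val.prod = ∏ q ∈ t, q := Finset.prod_val t
  have hdvd : ∏ q ∈ t, q ∣ n :=
    (Finset.prod_dvd_prod_of_subset _ _ _ ht).trans (Nat.prod_primeFactors_dvd n)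
  have hmoebius : (ArithmeticFunction.moebius (∏ q ∈ t, q) : ℝ) = ∏ _q ∈ t, (-1 : ℝ) := by
    rw [ArithmeticFunction.isMultiplicative_moebius.map_prod_of_subset_primeFactors n t ht,
      Int.cast_prod]
    refine Finset.prod_congr rfl fun q hq => ?_
    simp [ArithmeticFunction.moebius_apply_prime (Nat.prime_of_mem_primeFactors (ht hq))]
  have hfac : ∀ p, (n / ∏ q ∈ t, q).factorization p =
      n.factorization p - if p ∈ t then 1 else 0 := fun p => by
    rw [Nat.factorization_div hdvd, Finsupp.tsub_apply,
      factorization_prod_of_subset_primeFactors ht]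
  simp_rw [hval, hmoebius, hfac]
  rw [← Finset.prod_sdiff ht, mul_left_comm, ← Finset.prod_mul_distrib, mul_comm]
  congr 1
  · exact Finset.prod_congr rfl fun p hp => by simp [hp]
  · exact Finset.prod_congr rfl fun p hp => by simp [(Finset.mem_sdiff.mp hp).2]

/-- For `θ` of Euler-product shape, `(θ∗μ)(n) = c · ∏_{p ∤ n} A_p(0) ·
∏_{p^ν ∥ n} (A_p(ν) − A_p(ν−1))`. -/
theorem dconv_of_eulerRep (θ : ℕ → ℝ) (c : ℝ) (A : ℕ → ℕ → ℝ)
    (hθ0 : ∀ n : ℕ, 0 ≤ θ n) (hrep : EulerRep θ c A)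
    (hne : ∃ n : ℕ, 0 < n ∧ θ n ≠ 0) :
    ∀ n : ℕ, 0 < n →
      dconv θ n = c * (∏' p : {p : ℕ // p.Prime ∧ ¬ p ∣ n}, A p.1 0) *
        ∏ p ∈ n.primeFactors, (A p (n.factorization p) - A p (n.factorization p - 1)) := by
  intro n hn
  rw [← sum_moebius_mul_prod A hn.ne', Finset.mul_sum]
  refine Finset.sum_congr rfl fun d hd => ?_
  rw [hrep.apply_of_dvd hn.ne' (Nat.div_dvd_of_dvd (Nat.dvd_of_mem_divisors hd))]
  ring
end

section
/- Let b be a positive integer, C₁, C₂, C₃ ≥ 1 real numbers, and let θ : ℤ₊ → ℝ be non-negative, represented as θ(n) = c·∏_{p^ν ∥ n} A_p(ν) · ∏_{p ∤ n} A_p(0) with c ∈ ℝ and non-negative A_p : ℕ → ℝ (with the convention that an infinite product converges if the partial products of its nonzero factors converge to a nonzero limit, and equals 0 if some factor vanishes), satisfying: (i) for all primes p and all ν ≥ 1, |A_p(ν) − A_p(ν−1)| ≤ C₁ if p^ν | b and |A_p(ν) − A_p(ν−1)| ≤ C₂·p^{−ν} if p^ν ∤ b; and (ii) for all positive integers k,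 |c·∏_{p ∤ k} A_p(0)| ≤ C₃. Then there is a constant K depending only on C₂ such that for all t ≥ 0, ∑_{0 < n ≤ t} |(θ∗μ)(n)|·n ≤ K·τ(b)·(C₁C₂)^{ω(b)}·C₃·t·(log(t+2))^{C₂−1}. -/
/-- The local data `c, A` satisfies the smallness conditions of the set `Θ₂(b, C₁, C₂, C₃)`. -/
def SmallCond (b : ℕ) (C₁ C₂ C₃ c : ℝ) (A : ℕ → ℕ → ℝ) : Prop :=
  (∀ p ν : ℕ, p.Prime → 1 ≤ ν →
    (p ^ ν ∣ b → |A p ν - A p (ν - 1)| ≤ C₁) ∧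
    (¬ p ^ ν ∣ b → |A p ν - A p (ν - 1)| ≤ C₂ / (p : ℝ) ^ ν)) ∧
  (∀ k : ℕ, 0 < k → |c * ∏' p : {p : ℕ // p.Prime ∧ ¬ p ∣ k}, A p.1 0| ≤ C₃)

open Finset

/-! ### The sum of `C ^ ω(n)` -/

lemma tsum_rpow_neg_le {s : ℝ} (hs : 1 < s) :
    Summable (fun n : ℕ => (n : ℝ) ^ (-s)) ∧ ∑' n : ℕ, (n : ℝ) ^ (-s) ≤ 1 + 1 / (s - 1) := by
  have hsum : Summable (fun n : ℕ => (n : ℝ) ^ (-s)) := Real.summable_nat_rpow.2 (by linarith)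
  refine ⟨hsum, ?_⟩
  rw [hsum.tsum_eq_zero_add]
  have h := ZetaAsymptotics.zeta_limit_aux1 hs
  have hT : 0 ≤ ZetaAsymptotics.termTSum s :=
    tsum_nonneg fun n => ZetaAsymptotics.term_nonneg _ _
  have h0 : ((0 : ℕ) : ℝ) ^ (-s) = 0 := by
    rw [Nat.cast_zero, Real.zero_rpow (by linarith)]
  have he : ∑' n : ℕ, ((n + 1 : ℕ) : ℝ) ^ (-s) = ∑' n : ℕ, 1 / ((n : ℝ) + 1) ^ s := by
    refine tsum_congr fun n => ?_
    rw [Real.rpow_neg (by positivity), one_div]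
    push_cast
    rfl
  rw [h0, he]
  have : 0 ≤ s * ZetaAsymptotics.termTSum s := by positivity
  linarith

/-- Partial Euler products of `ζ(s)` are at most `ζ(s) ≤ 1 + 1/(s-1)`. -/
lemma prod_primesBelow_le {s : ℝ} (hs : 1 < s) (N : ℕ) :
    ∏ p ∈ N.primesBelow, (1 - (p : ℝ) ^ (-s))⁻¹ ≤ 1 + 1 / (s - 1) := by
  obtain ⟨hsum, hle⟩ := tsum_rpow_neg_le hs
  let f : ℕ →* ℝ :=
    { toFun := fun n => (n : ℝ) ^ (-s)
      map_one' := by simp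
      map_mul' := fun m n => by
        push_cast
        exact Real.mul_rpow (Nat.cast_nonneg _) (Nat.cast_nonneg _) }
  have hf : ∀ {p : ℕ}, p.Prime → ‖f p‖ < 1 := by
    intro p hp
    have h1 : (1 : ℝ) < p := by exact_mod_cast hp.one_lt
    change ‖(p : ℝ) ^ (-s)‖ < 1
    rw [Real.norm_of_nonneg (by positivity)]
    exact Real.rpow_lt_one_of_one_lt_of_neg h1 (by linarith)
  have h := (EulerProduct.summable_and_hasSum_smoothNumbers_prod_primesBelow_geometric hf N).2
  have h2 := h.tsum_eq
  change _ = ∏ p ∈ N.primesBelow, (1 - (p : ℝ) ^ (-s))⁻¹ at h2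
  rw [← h2]
  refine le_trans ?_ hle
  exact hsum.tsum_subtype_le (fun n : ℕ => (n : ℝ) ^ (-s)) _ (fun n => by positivity)

/-- Bernoulli's inequality for the local factors: with `y = p^{-s}`, the left side is
`∑_k C^{ω(p^k)} p^{-ks}` and the right side is the local factor of `ζ(s)^C`. -/
lemma local_factor_le {C y : ℝ} (hC : 1 ≤ C) (hy0 : 0 ≤ y) (hy : y < 1) :
    1 + C * (y * (1 - y)⁻¹) ≤ ((1 - y)⁻¹) ^ C := by
  have h : (1 - y)⁻¹ = 1 + y * (1 - y)⁻¹ := by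
    have : 1 - y ≠ 0 := by linarith
    field_simp
    ring
  have h1 : 0 ≤ y * (1 - y)⁻¹ := mul_nonneg hy0 (inv_nonneg.2 (by linarith))
  conv_rhs => rw [h]
  exact one_add_mul_self_le_rpow_one_add (by linarith) hC

/-- The Dirichlet series of `C^{ω(n)}` is dominated by `ζ(s)^C`. -/
lemma sum_pow_omega_rpow_le {C s : ℝ} (hC : 1 ≤ C) (hs : 1 < s) (N : ℕ) :
    ∑ n ∈ Icc 1 N, C ^ n.primeFactors.card * (n : ℝ) ^ (-s) ≤ (1 + 1 / (s - 1)) ^ C := by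
  set f : ℕ → ℝ := fun n => C ^ n.primeFactors.card * (n : ℝ) ^ (-s) with hf
  have hf0 : ∀ n, 0 ≤ f n := fun n => by positivity
  have hf1 : f 1 = 1 := by simp [hf]
  have hmul : ∀ {m n : ℕ}, m.Coprime n → f (m * n) = f m * f n := by
    intro m n h
    simp only [hf]
    rw [h.primeFactors_mul, card_union_of_disjoint h.disjoint_primeFactors, pow_add]
    push_cast
    rw [Real.mul_rpow (Nat.cast_nonneg _) (Nat.cast_nonneg _)]
    ring
  have hlt : ∀ {p : ℕ}, p.Prime → (p : ℝ) ^ (-s) < 1 := fun {p} hp =>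
    Real.rpow_lt_one_of_one_lt_of_neg (by exact_mod_cast hp.one_lt) (by linarith)
  have hpow : ∀ {p : ℕ}, p.Prime → ∀ k : ℕ,
      f (p ^ (k + 1)) = C * ((p : ℝ) ^ (-s) * ((p : ℝ) ^ (-s)) ^ k) := by
    intro p hp k
    simp only [hf]
    rw [Nat.primeFactors_prime_pow (Nat.succ_ne_zero k) hp, card_singleton, pow_one, ← pow_succ']
    push_cast
    rw [← Real.rpow_natCast, ← Real.rpow_mul (by positivity), ← Real.rpow_natCast,
      ← Real.rpow_mul (by positivity), mul_comm (-s)]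
  have hgeo : ∀ {p : ℕ}, p.Prime →
      HasSum (fun n => f (p ^ n)) (1 + C * ((p : ℝ) ^ (-s) * (1 - (p : ℝ) ^ (-s))⁻¹)) := by
    intro p hp
    have h1 := ((hasSum_geometric_of_lt_one (by positivity : 0 ≤ (p : ℝ) ^ (-s)) (hlt hp)).mul_left
      ((p : ℝ) ^ (-s))).mul_left C
    simp only [← hpow hp] at h1
    have h2 := (hasSum_nat_add_iff (f := fun n => f (p ^ n)) 1).1 h1
    simpa [hf1, add_comm] using h2
  have hE := EulerProduct.summable_and_hasSum_smoothNumbers_prod_primesBelow_tsum hf1 hmul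
    (fun {p} hp => by simpa only [Real.norm_of_nonneg (hf0 _)] using (hgeo hp).summable) (N + 1)
  have hsub : ∑ n ∈ Icc 1 N, f n ≤ ∏ p ∈ (N + 1).primesBelow, ∑' n, f (p ^ n) := by
    rw [← hE.2.tsum_eq]
    have hmem : ∀ n ∈ Icc 1 N, n ∈ (N + 1).smoothNumbers := by
      intro n hn
      rw [mem_Icc] at hn
      exact Nat.mem_smoothNumbers_of_lt hn.1 (by omega)
    rw [← sum_attach]
    have := hE.2.summable.sum_le_tsum
      ((Icc 1 N).attach.map ⟨fun n => (⟨n.1, hmem n.1 n.2⟩ : (N + 1).smoothNumbers),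
        fun a b h => Subtype.ext (by simpa using h)⟩) (fun n _ => hf0 _)
    rw [sum_map] at this
    exact this
  refine hsub.trans ?_
  calc ∏ p ∈ (N + 1).primesBelow, ∑' n, f (p ^ n)
      ≤ ∏ p ∈ (N + 1).primesBelow, ((1 - (p : ℝ) ^ (-s))⁻¹) ^ C := by
        refine prod_le_prod (fun p _ => tsum_nonneg fun n => hf0 _) fun p hp => ?_
        have hp := Nat.prime_of_mem_primesBelow hp
        rw [(hgeo hp).tsum_eq]
        exact local_factor_le hC (by positivity) (hlt hp)
    _ = (∏ p ∈ (N + 1).primesBelow, (1 - (p : ℝ) ^ (-s))⁻¹) ^ C := by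
        refine Real.finsetProd_rpow _ _ (fun p hp => ?_) _
        have hp := Nat.prime_of_mem_primesBelow hp
        exact inv_nonneg.2 (by linarith [hlt hp])
    _ ≤ _ := by
        refine Real.rpow_le_rpow (prod_nonneg fun p hp => ?_) (prod_primesBelow_le hs _)
          (by linarith)
        have hp := Nat.prime_of_mem_primesBelow hp
        exact inv_nonneg.2 (by linarith [hlt hp])

/-- Dirichlet's rearrangement of a sum over pairs `d * m ≤ N`. -/
lemma sum_divisors_swap (h : ℕ → ℕ → ℝ) (N : ℕ) :
    ∑ n ∈ Icc 1 N, ∑ d ∈ n.divisors, h d (n / d) =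
      ∑ d ∈ Icc 1 N, ∑ m ∈ Icc 1 (N / d), h d m := by
  rw [sum_sigma', sum_sigma']
  refine sum_bij' (fun x _ => ⟨x.2, x.1 / x.2⟩) (fun x _ => ⟨x.1 * x.2, x.1⟩) ?_ ?_ ?_ ?_ ?_
  · rintro ⟨n, d⟩ hx
    simp only [mem_sigma, mem_Icc, Nat.mem_divisors] at hx ⊢
    obtain ⟨⟨h1, h2⟩, ⟨k, rfl⟩, h3⟩ := hx
    have hd : 0 < d := Nat.pos_of_ne_zero (by rintro rfl; simp at h3)
    have hk : 0 < k := Nat.pos_of_ne_zero (by rintro rfl; simp at h3)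
    rw [Nat.mul_div_cancel_left _ hd]
    refine ⟨⟨hd, ?_⟩, hk, ?_⟩
    · nlinarith
    · rw [Nat.le_div_iff_mul_le hd]; linarith
  · rintro ⟨d, m⟩ hx
    simp only [mem_sigma, mem_Icc, Nat.mem_divisors] at hx ⊢
    obtain ⟨⟨h1, h2⟩, h3, h4⟩ := hx
    rw [Nat.le_div_iff_mul_le h1] at h4
    exact ⟨⟨by nlinarith, by linarith⟩, ⟨m, rfl⟩, by positivity⟩
  · rintro ⟨n, d⟩ hx
    simp only [mem_sigma, mem_Icc, Nat.mem_divisors] at hx ⊢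
    simp [Nat.mul_div_cancel' hx.2.1]
  · rintro ⟨d, m⟩ hx
    simp only [mem_sigma, mem_Icc] at hx ⊢
    simp [Nat.mul_div_cancel_left _ hx.1.1]
  · rintro ⟨n, d⟩ hx
    rfl

/-- The logarithmic weight is expanded as `log n = ∑_{d ∣ n} Λ(n/d)`; dividing `n` by a prime power
lowers `ω` by at most one, and the sum over the prime power is bounded by Chebyshev's estimate. -/
lemma sum_pow_omega_mul_log_le {C : ℝ} (hC : 1 ≤ C) {x : ℝ} (hx : 1 ≤ x) :
    ∑ n ∈ Icc 1 ⌊x⌋₊, C ^ n.primeFactors.card * Real.log n ≤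
      C * (Real.log 4 + 4) * x * ∑ n ∈ Icc 1 ⌊x⌋₊, C ^ n.primeFactors.card / n := by
  have hx0 : 0 ≤ x := by linarith
  calc ∑ n ∈ Icc 1 ⌊x⌋₊, C ^ n.primeFactors.card * Real.log n
      ≤ ∑ n ∈ Icc 1 ⌊x⌋₊, ∑ d ∈ n.divisors,
          C * C ^ d.primeFactors.card * ArithmeticFunction.vonMangoldt (n / d) := by
        refine sum_le_sum fun n hn => ?_
        rw [← ArithmeticFunction.vonMangoldt_sum, mul_sum, ← Nat.sum_div_divisors]
        refine sum_le_sum fun d hd => ?_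
        by_cases hL : ArithmeticFunction.vonMangoldt (n / d) = 0
        · simp [hL]
        rw [← ne_eq, ArithmeticFunction.vonMangoldt_ne_zero_iff, isPrimePow_nat_iff] at hL
        obtain ⟨p, k, hp, hk, hpk⟩ := hL
        refine mul_le_mul_of_nonneg_right ?_ ArithmeticFunction.vonMangoldt_nonneg
        rw [← pow_succ']
        refine pow_le_pow_right₀ hC ?_
        obtain ⟨hdn, hn0⟩ := Nat.mem_divisors.1 hd
        have hn' : n = d * p ^ k := by rw [hpk, Nat.mul_div_cancel' hdn]
        have hd0 : d ≠ 0 := by rintro rfl; simp at hn'; exact hn0 hn'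
        rw [hn', Nat.primeFactors_mul hd0 (pow_pos hp.pos _).ne',
          Nat.primeFactors_prime_pow hk.ne' hp]
        exact (card_union_le _ _).trans (by simp)
    _ = ∑ d ∈ Icc 1 ⌊x⌋₊, ∑ m ∈ Icc 1 (⌊x⌋₊ / d),
          C * C ^ d.primeFactors.card * ArithmeticFunction.vonMangoldt m :=
        sum_divisors_swap (fun d m => C * C ^ d.primeFactors.card *
          ArithmeticFunction.vonMangoldt m) _
    _ ≤ ∑ d ∈ Icc 1 ⌊x⌋₊, C * C ^ d.primeFactors.card * ((Real.log 4 + 4) * (x / d)) := by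
        refine sum_le_sum fun d hd => ?_
        rw [← mul_sum]
        refine mul_le_mul_of_nonneg_left ?_ (by positivity)
        refine le_trans (le_of_eq ?_)
          (Chebyshev.psi_le_const_mul_self (by positivity : 0 ≤ x / d))
        rw [Chebyshev.psi, Nat.floor_div_natCast]
        rfl
    _ = _ := by
        rw [mul_sum]
        refine sum_congr rfl fun d _ => ?_
        ring

lemma sum_pow_omega_le {C : ℝ} (hC : 1 ≤ C) {x : ℝ} (hx : 1 ≤ x) :
    ∑ n ∈ Icc 1 ⌊x⌋₊, C ^ n.primeFactors.card ≤
      (C * (Real.log 4 + 4) + 3) * Real.exp 1 * 2 ^ C * x * Real.log (x + 2) ^ (C - 1) := by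
  set L := Real.log (x + 2) with hL
  have hL1 : 1 ≤ L := by
    rw [hL, Real.le_log_iff_exp_le (by linarith)]
    linarith [Real.exp_one_lt_d9]
  have hL0 : 0 < L := by linarith
  set T := ∑ n ∈ Icc 1 ⌊x⌋₊, C ^ n.primeFactors.card / (n : ℝ) with hT
  have hTle : T ≤ Real.exp 1 * (2 ^ C * (L * L ^ (C - 1))) := by
    have h1 : T ≤ Real.exp 1 * ∑ n ∈ Icc 1 ⌊x⌋₊, C ^ n.primeFactors.card *
        (n : ℝ) ^ (-(1 + 1 / L)) := by
      rw [mul_sum]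
      refine sum_le_sum fun n hn => ?_
      rw [mem_Icc, Nat.le_floor_iff (by linarith)] at hn
      have hn0 : (0 : ℝ) < n := by exact_mod_cast hn.1
      -- Rankin's trick: `n ^ (1 / L) ≤ exp 1` because `log n ≤ L`.
      have h2 : (1 : ℝ) ≤ Real.exp 1 * (n : ℝ) ^ (-(1 / L)) := by
        rw [Real.rpow_def_of_pos hn0, ← Real.exp_add, Real.one_le_exp_iff]
        have : Real.log n ≤ L := Real.log_le_log hn0 (by linarith)
        have h3 : Real.log n / L ≤ 1 := (div_le_one hL0).2 this
        have h4 : Real.log n * -(1 / L) = -(Real.log n / L) := by ring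
        linarith
      have h5 : (n : ℝ) ^ (-(1 + 1 / L)) = (n : ℝ) ^ (-(1 / L)) / n := by
        rw [show -(1 + 1 / L) = -(1 / L) - 1 by ring, Real.rpow_sub_one hn0.ne']
      rw [h5]
      have h6 : 0 ≤ C ^ n.primeFactors.card / (n : ℝ) := by positivity
      calc C ^ n.primeFactors.card / (n : ℝ)
          ≤ C ^ n.primeFactors.card / (n : ℝ) * (Real.exp 1 * (n : ℝ) ^ (-(1 / L))) :=
            le_mul_of_one_le_right h6 h2
        _ = _ := by ring
    refine h1.trans (mul_le_mul_of_nonneg_left ?_ (Real.exp_pos _).le)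
    refine (sum_pow_omega_rpow_le hC (lt_add_of_pos_right 1 (by positivity)) _).trans ?_
    have h7 : 1 + 1 / (1 + 1 / L - 1) = 1 + L := by simp
    have h8 : L * L ^ (C - 1) = L ^ C := by
      rw [Real.rpow_sub_one hL0.ne']
      field_simp
    rw [h7, h8, ← Real.mul_rpow (by norm_num) hL0.le]
    exact Real.rpow_le_rpow (by linarith) (by linarith) (by linarith)
  have hS : (∑ n ∈ Icc 1 ⌊x⌋₊, C ^ n.primeFactors.card) * L ≤
      (C * (Real.log 4 + 4) + 3) * x * T := by
    have h1 : (∑ n ∈ Icc 1 ⌊x⌋₊, C ^ n.primeFactors.card) * L ≤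
        ∑ n ∈ Icc 1 ⌊x⌋₊, (C ^ n.primeFactors.card * Real.log n +
          3 * x * (C ^ n.primeFactors.card / n)) := by
      rw [sum_mul]
      refine sum_le_sum fun n hn => ?_
      have hn0 : (0 : ℝ) < n := by exact_mod_cast (mem_Icc.1 hn).1
      have h2 : L ≤ Real.log n + 3 * x / n := by
        have h3 : L = Real.log n + Real.log ((x + 2) / n) := by
          rw [Real.log_div (by linarith) hn0.ne']
          ring
        have h4 : Real.log ((x + 2) / n) ≤ (x + 2) / n := Real.log_le_self (by positivity)
        have h5 : (x + 2) / n ≤ 3 * x / n := by gcongr; linarith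
        linarith
      calc C ^ n.primeFactors.card * L
          ≤ C ^ n.primeFactors.card * (Real.log n + 3 * x / n) := by gcongr
        _ = _ := by ring
    rw [sum_add_distrib, ← mul_sum] at h1
    have h2 := sum_pow_omega_mul_log_le hC hx
    calc _ ≤ _ := h1
      _ ≤ C * (Real.log 4 + 4) * x * T + 3 * x * T := by gcongr
      _ = _ := by ring
  have hlog4 : 0 ≤ Real.log 4 := Real.log_nonneg (by norm_num)
  refine le_of_mul_le_mul_right ?_ hL0
  calc _ ≤ _ := hS
    _ ≤ (C * (Real.log 4 + 4) + 3) * x * (Real.exp 1 * (2 ^ C * (L * L ^ (C - 1)))) := by gcongr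
    _ = _ := by ring

/-! ### The local structure of `θ ∗ μ` -/

/-- For `m ∣ n`, `θ m` written with the tail product over the primes not dividing `n`, so that the
tail is the same for all divisors of `n`. -/
lemma theta_eq_of_dvd {θ : ℕ → ℝ} {c : ℝ} {A : ℕ → ℕ → ℝ} (hE : EulerRep θ c A)
    {m n : ℕ} (hn : 0 < n) (hmn : m ∣ n) :
    θ m = c * (∏ p ∈ n.primeFactors, A p (m.factorization p)) *
      ∏' p : {p : ℕ // p.Prime ∧ ¬ p ∣ n}, A p.1 0 := by
  have hm : 0 < m := Nat.pos_of_dvd_of_pos hmn hn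
  have hsub : m.primeFactors ⊆ n.primeFactors := Nat.primeFactors_mono hmn hn.ne'
  have hset : {p : ℕ | p.Prime ∧ ¬ p ∣ m} =
      ((n.primeFactors \ m.primeFactors : Finset ℕ) : Set ℕ) ∪ {p : ℕ | p.Prime ∧ ¬ p ∣ n} := by
    ext p
    simp only [Set.mem_ofPred_eq, Set.mem_union, mem_coe, mem_sdiff, Nat.mem_primeFactors]
    constructor
    · rintro ⟨hp, hpm⟩
      by_cases hpn : p ∣ n
      · exact Or.inl ⟨⟨hp, hpn, hn.ne'⟩, fun h => hpm h.2.1⟩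
      · exact Or.inr ⟨hp, hpn⟩
    · rintro (⟨⟨hp, -, -⟩, h⟩ | ⟨hp, hpn⟩)
      · exact ⟨hp, fun hpm => h ⟨hp, hpm, hm.ne'⟩⟩
      · exact ⟨hp, fun h => hpn (h.trans hmn)⟩
  have hdisj : Disjoint ((n.primeFactors \ m.primeFactors : Finset ℕ) : Set ℕ)
      {p : ℕ | p.Prime ∧ ¬ p ∣ n} := by
    rw [Set.disjoint_left]
    intro p hp hp'
    exact hp'.2 (Nat.dvd_of_mem_primeFactors (mem_sdiff.1 (mem_coe.1 hp)).1)
  have hP := HasProd.mul_disjoint (f := fun p => A p 0) hdisj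
    (Finset.hasProd (n.primeFactors \ m.primeFactors) (fun p => A p 0)) (hE.2.1 n hn).hasProd
  rw [← hset] at hP
  have hP' : ∏' p : {p : ℕ // p.Prime ∧ ¬ p ∣ m}, A p.1 0 =
      (∏ p ∈ n.primeFactors \ m.primeFactors, A p 0) *
        ∏' p : {p : ℕ // p.Prime ∧ ¬ p ∣ n}, A p.1 0 := hP.tprod_eq
  rw [hE.2.2 m hm, hP', ← prod_sdiff hsub]
  have hz : ∏ p ∈ n.primeFactors \ m.primeFactors, A p (m.factorization p) =
      ∏ p ∈ n.primeFactors \ m.primeFactors, A p 0 := by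
    refine prod_congr rfl fun p hp => ?_
    rw [Finsupp.notMem_support_iff.1 (mem_sdiff.1 hp).2]
  rw [hz]
  ring

/-- Only squarefree divisors contribute to `θ ∗ μ`, and these are the products of the subsets of
`n.primeFactors`; the sum over subsets is the expansion of the product of differences. -/
lemma dconv_eq {θ : ℕ → ℝ} {c : ℝ} {A : ℕ → ℕ → ℝ} (hE : EulerRep θ c A)
    {n : ℕ} (hn : 0 < n) :
    dconv θ n = (c * ∏' p : {p : ℕ // p.Prime ∧ ¬ p ∣ n}, A p.1 0) *
      ∏ p ∈ n.primeFactors, (A p (n.factorization p) - A p (n.factorization p - 1)) := by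
  have hset : (UniqueFactorizationMonoid.normalizedFactors n).toFinset = n.primeFactors := by
    rw [Nat.factors_eq]
    rfl
  have h1 : dconv θ n = ∑ d ∈ n.divisors with Squarefree d,
      (ArithmeticFunction.moebius d : ℝ) * θ (n / d) := by
    rw [dconv, sum_filter]
    refine sum_congr rfl fun d _ => ?_
    split_ifs with h
    · rfl
    · simp [ArithmeticFunction.moebius_eq_zero_of_not_squarefree h]
  rw [h1, Nat.sum_divisors_filter_squarefree hn.ne', hset, prod_sub, mul_sum]
  refine sum_congr rfl fun S hS => ?_
  rw [mem_powerset] at hS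
  have hprime : ∀ p ∈ S, p.Prime := fun p hp => Nat.prime_of_mem_primeFactors (hS hp)
  rw [show S.val.prod = ∏ p ∈ S, p from prod_val S]
  have hdvd : ∏ p ∈ S, p ∣ n := (prod_dvd_prod_of_subset _ _ _ hS).trans
    (Nat.prod_primeFactors_dvd n)
  have hmu : ArithmeticFunction.moebius (∏ p ∈ S, p) = (-1) ^ #S := by
    rw [ArithmeticFunction.isMultiplicative_moebius.map_prod_of_subset_primeFactors n S hS,
      prod_congr rfl fun p hp => ArithmeticFunction.moebius_apply_prime (hprime p hp), prod_const]
  have hfac : ∀ p, (n / ∏ p ∈ S, p).factorization p =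
      n.factorization p - if p ∈ S then 1 else 0 := by
    intro p
    rw [Nat.factorization_div hdvd, Finsupp.tsub_apply,
      Nat.factorization_prod_apply fun p hp => (hprime p hp).ne_zero]
    congr 1
    rw [sum_congr rfl fun q hq => by rw [(hprime q hq).factorization, Finsupp.single_apply],
      sum_ite_eq']
  rw [hmu, theta_eq_of_dvd hE hn (Nat.div_dvd_of_dvd hdvd), ← prod_sdiff hS]
  have ha : ∏ p ∈ n.primeFactors \ S, A p ((n / ∏ p ∈ S, p).factorization p) =
      ∏ p ∈ n.primeFactors \ S, A p (n.factorization p) :=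
    prod_congr rfl fun p hp => by rw [hfac, if_neg (mem_sdiff.1 hp).2, Nat.sub_zero]
  have hb : ∏ p ∈ S, A p ((n / ∏ p ∈ S, p).factorization p) =
      ∏ p ∈ S, A p (n.factorization p - 1) :=
    prod_congr rfl fun p hp => by rw [hfac, if_pos hp]
  rw [ha, hb]
  push_cast
  ring

/-- The divisor `d` is the product of the prime powers `p ^ ν ∥ n` that divide `b`. -/
lemma exists_split {b : ℕ} {C₁ C₂ C₃ c : ℝ} {θ : ℕ → ℝ} {A : ℕ → ℕ → ℝ} (hb : 0 < b)
    (hC₁ : 1 ≤ C₁) (hC₂ : 1 ≤ C₂) (hC₃ : 1 ≤ C₃) (hE : EulerRep θ c A)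
    (hS : SmallCond b C₁ C₂ C₃ c A) {n : ℕ} (hn : 0 < n) :
    ∃ d ∈ b.divisors, d ∣ n ∧ |dconv θ n| * n ≤
      C₃ * C₁ ^ b.primeFactors.card * d * C₂ ^ (n / d).primeFactors.card := by
  set v := n.factorization with hv
  set S := n.primeFactors.filter (fun p => p ^ v p ∣ b) with hSdef
  set T := n.primeFactors.filter (fun p => ¬ p ^ v p ∣ b) with hTdef
  have hprime : ∀ {p}, p ∈ n.primeFactors → p.Prime := fun hp => Nat.prime_of_mem_primeFactors hp
  have hvpos : ∀ {p}, p ∈ n.primeFactors → 1 ≤ v p := fun {p} hp =>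
    (hprime hp).factorization_pos_of_dvd hn.ne' (Nat.dvd_of_mem_primeFactors hp)
  set d := ∏ p ∈ S, p ^ v p with hd
  set m := ∏ p ∈ T, p ^ v p with hm
  have hn_eq : n = d * m := by
    rw [hd, hm, hSdef, hTdef, prod_filter_mul_prod_filter_not]
    exact (Nat.prod_factorization_pow_eq_self hn.ne').symm
  have hd0 : 0 < d := prod_pos fun p hp => pow_pos (hprime (mem_filter.1 hp).1).pos _
  have hm0 : 0 < m := prod_pos fun p hp => pow_pos (hprime (mem_filter.1 hp).1).pos _
  have hndm : n / d = m := by rw [hn_eq, Nat.mul_div_cancel_left _ hd0]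
  have hdb : d ∣ b := by
    refine Finset.prod_dvd_of_isRelPrime (fun p hp q hq hpq => ?_) fun p hp => (mem_filter.1 hp).2
    exact Nat.coprime_iff_isRelPrime.1 (Nat.coprime_pow_primes _ _ (hprime (mem_filter.1 hp).1)
      (hprime (mem_filter.1 hq).1) hpq)
  have hSb : #S ≤ b.primeFactors.card := by
    refine card_le_card fun p hp => ?_
    obtain ⟨hp1, hp2⟩ := mem_filter.1 hp
    exact Nat.mem_primeFactors.2
      ⟨hprime hp1, (dvd_pow_self p (by have := hvpos hp1; omega)).trans hp2, hb.ne'⟩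
  have hTm : #T ≤ m.primeFactors.card := by
    refine card_le_card fun p hp => ?_
    have hp1 := (mem_filter.1 hp).1
    exact Nat.mem_primeFactors.2
      ⟨hprime hp1, (dvd_pow_self p (by have := hvpos hp1; omega)).trans
        (dvd_prod_of_mem (fun p => p ^ v p) hp), hm0.ne'⟩
  refine ⟨d, Nat.mem_divisors.2 ⟨hdb, hb.ne'⟩, ⟨m, hn_eq⟩, ?_⟩
  rw [hndm, dconv_eq hE hn, abs_mul, abs_prod, ← hv,
    ← prod_filter_mul_prod_filter_not n.primeFactors (fun p => p ^ v p ∣ b)]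
  have hcP := hS.2 n hn
  have hprodS : ∏ p ∈ S, |A p (v p) - A p (v p - 1)| ≤ C₁ ^ #S := by
    rw [← prod_const]
    refine prod_le_prod (fun p _ => abs_nonneg _) fun p hp => ?_
    obtain ⟨hp1, hp2⟩ := mem_filter.1 hp
    exact (hS.1 p (v p) (hprime hp1) (hvpos hp1)).1 hp2
  have hprodT : (∏ p ∈ T, |A p (v p) - A p (v p - 1)|) * m ≤ C₂ ^ #T := by
    rw [hm, Nat.cast_prod, ← prod_mul_distrib, ← prod_const]
    refine prod_le_prod (fun p _ => by positivity) fun p hp => ?_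
    obtain ⟨hp1, hp2⟩ := mem_filter.1 hp
    have h := (hS.1 p (v p) (hprime hp1) (hvpos hp1)).2 hp2
    have hpp : (0 : ℝ) < (p : ℝ) ^ v p := pow_pos (by exact_mod_cast (hprime hp1).pos) _
    rw [le_div_iff₀ hpp] at h
    exact_mod_cast h
  have hncast : (n : ℝ) = d * m := by exact_mod_cast hn_eq
  rw [hncast]
  set X := |c * ∏' p : {p : ℕ // p.Prime ∧ ¬ p ∣ n}, A p.1 0|
  calc X * ((∏ p ∈ S, |A p (v p) - A p (v p - 1)|) *
        ∏ p ∈ T, |A p (v p) - A p (v p - 1)|) * (d * m)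
      = X * (∏ p ∈ S, |A p (v p) - A p (v p - 1)|) * d *
        ((∏ p ∈ T, |A p (v p) - A p (v p - 1)|) * m) := by ring
    _ ≤ C₃ * C₁ ^ #S * d * C₂ ^ #T := by gcongr
    _ ≤ C₃ * C₁ ^ b.primeFactors.card * d * C₂ ^ m.primeFactors.card := by gcongr

/-! ### Summation over the divisors of `b` -/

lemma sum_multiples (h : ℕ → ℝ) {d : ℕ} (hd : 0 < d) (N : ℕ) :
    ∑ n ∈ Icc 1 N with d ∣ n, h (n / d) = ∑ m ∈ Icc 1 (N / d), h m := by
  refine sum_bij' (fun n _ => n / d) (fun m _ => d * m) ?_ ?_ ?_ ?_ (fun _ _ => rfl)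
  · intro n hn
    simp only [mem_filter, mem_Icc] at hn ⊢
    exact ⟨Nat.div_pos (Nat.le_of_dvd hn.1.1 hn.2) hd, Nat.div_le_div_right hn.1.2⟩
  · intro m hm
    simp only [mem_filter, mem_Icc, Nat.le_div_iff_mul_le hd] at hm ⊢
    exact ⟨⟨Nat.mul_pos hd hm.1, by linarith⟩, Nat.dvd_mul_right _ _⟩
  · intro n hn
    exact Nat.mul_div_cancel' (mem_filter.1 hn).2
  · intro m _
    exact Nat.mul_div_cancel_left _ hd

/-- For `θ ∈ Θ₂(b, C₁, C₂, C₃)`, one has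
`∑_{0 < n ≤ t} |(θ∗μ)(n)| n ≪_{C₂} τ(b) (C₁C₂)^{ω(b)} C₃ t (log(t+2))^{C₂-1}`. -/
theorem sum_dconv_mul_le (C₂ : ℝ) (hC₂ : 1 ≤ C₂) :
    ∃ K : ℝ, 0 < K ∧
      ∀ (b : ℕ) (C₁ C₃ : ℝ) (θ : ℕ → ℝ) (c : ℝ) (A : ℕ → ℕ → ℝ),
        0 < b → 1 ≤ C₁ → 1 ≤ C₃ →
        (∀ n : ℕ, 0 ≤ θ n) →
        EulerRep θ c A →
        SmallCond b C₁ C₂ C₃ c A →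
        ∀ t : ℝ, 0 ≤ t →
          ∑ n ∈ Finset.Icc 1 ⌊t⌋₊, |dconv θ n| * n ≤
            K * b.divisors.card * (C₁ * C₂) ^ b.primeFactors.card * C₃ *
              t * Real.log (t + 2) ^ (C₂ - 1) := by
  have hlog4 : 0 ≤ Real.log 4 := Real.log_nonneg (by norm_num)
  refine ⟨(C₂ * (Real.log 4 + 4) + 3) * Real.exp 1 * 2 ^ C₂, by positivity, ?_⟩
  intro b C₁ C₃ θ c A hb hC₁ hC₃ _ hE hS t ht
  have hlog : 0 ≤ Real.log (t + 2) := Real.log_nonneg (by linarith)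
  set K := (C₂ * (Real.log 4 + 4) + 3) * Real.exp 1 * 2 ^ C₂ with hK
  have hK0 : 0 ≤ K := by positivity
  set W := C₃ * C₁ ^ b.primeFactors.card with hW
  have hW0 : 0 ≤ W := by positivity
  have hR0 : 0 ≤ K * t * Real.log (t + 2) ^ (C₂ - 1) := by positivity
  calc ∑ n ∈ Icc 1 ⌊t⌋₊, |dconv θ n| * n
      ≤ ∑ n ∈ Icc 1 ⌊t⌋₊, ∑ d ∈ b.divisors,
          if d ∣ n then W * d * C₂ ^ (n / d).primeFactors.card else 0 := by
        refine sum_le_sum fun n hn => ?_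
        obtain ⟨d, hdb, hdn, hle⟩ := exists_split hb hC₁ hC₂ hC₃ hE hS (mem_Icc.1 hn).1
        refine hle.trans ?_
        refine le_trans (le_of_eq ?_) (single_le_sum (fun e _ => ?_) hdb)
        · rw [if_pos hdn]
        · split_ifs <;> positivity
    _ = ∑ d ∈ b.divisors, W * d * ∑ m ∈ Icc 1 (⌊t⌋₊ / d), C₂ ^ m.primeFactors.card := by
        rw [sum_comm]
        refine sum_congr rfl fun d hd => ?_
        rw [← sum_filter, ← mul_sum,
          sum_multiples (fun m => C₂ ^ m.primeFactors.card) (Nat.pos_of_mem_divisors hd)]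
    _ ≤ ∑ d ∈ b.divisors, W * (K * t * Real.log (t + 2) ^ (C₂ - 1)) := by
        refine sum_le_sum fun d hd => ?_
        have hd0 : (0 : ℝ) < d := by exact_mod_cast Nat.pos_of_mem_divisors hd
        rw [mul_assoc]
        refine mul_le_mul_of_nonneg_left ?_ hW0
        rw [← Nat.floor_div_natCast]
        rcases lt_or_ge (t / d) 1 with h | h
        · rw [Nat.floor_eq_zero.2 h]
          simpa using hR0
        · have hd1 : (1 : ℝ) ≤ d := by exact_mod_cast Nat.pos_of_mem_divisors hd
          calc (d : ℝ) * ∑ m ∈ Icc 1 ⌊t / d⌋₊, C₂ ^ m.primeFactors.card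
              ≤ d * (K * (t / d) * Real.log (t / d + 2) ^ (C₂ - 1)) := by
                gcongr
                exact sum_pow_omega_le hC₂ h
            _ = K * t * Real.log (t / d + 2) ^ (C₂ - 1) := by field_simp
            _ ≤ K * t * Real.log (t + 2) ^ (C₂ - 1) := by
                have h1 : Real.log (t / d + 2) ≤ Real.log (t + 2) :=
                  Real.log_le_log (by positivity) (by linarith [div_le_self ht hd1])
                have h2 : 0 ≤ Real.log (t / d + 2) := Real.log_nonneg (by linarith)
                gcongr
    _ = b.divisors.card * (C₃ * C₁ ^ b.primeFactors.card *
          (K * t * Real.log (t + 2) ^ (C₂ - 1))) := by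
        rw [sum_const, nsmul_eq_mul]
    _ ≤ b.divisors.card * (C₃ * (C₁ * C₂) ^ b.primeFactors.card *
          (K * t * Real.log (t + 2) ^ (C₂ - 1))) := by
        gcongr
        exact le_mul_of_one_le_right (by linarith) hC₂
    _ = _ := by ring
end
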